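/- arXiv:1112.5677 — 4 statements merged into one kernel-verified Lean document; each statement's English description precedes it below -/
import Mathlib

section
/- Let γ(λ) ≥ 0 be a function with γ(λ) → +∞ as λ → +∞. Then there exists a real-valued, 2π-periodic, nowhere linear function φ of class C¹(𝕋) such that ‖e^{iλφ}‖_{A_1(𝕋)} = O(γ(|λ|) · log|λ|) as |λ| → ∞, λ ∈ ℝ. -/
open MeasureTheory Real Set
open scoped ENNReal

/-- The k-th Fourier coefficient of a (2π-periodic) function on the circle,
identified with a function on [0, 2π]. -/
noncomputable def fourierCoef (f : ℝ → ℂ) (k : ℤ) : ℂ :=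
  (1 / (2 * (Real.pi : ℂ))) *
    ∫ t in (0:ℝ)..(2 * Real.pi), f t * Complex.exp (-Complex.I * (k : ℂ) * (t : ℂ))

/-- The A_p(𝕋) norm: ℓ^p norm of the sequence of Fourier coefficients
(valued in ℝ≥0∞ so that divergence gives ∞). -/
noncomputable def ApNorm (p : ℝ) (f : ℝ → ℂ) : ℝ≥0∞ :=
  (∑' k : ℤ, ((‖fourierCoef f k‖₊ : ℝ≥0∞) ^ p)) ^ (1 / p)

/-! The function `φ` is the primitive of `h` minus its mean, where `h = G ∘ triangleWave` and `G`
is strictly increasing and continuous. Since `h` is constant on no interval, `φ` is nowhere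
linear.

If `φ` is replaced by a piecewise linear function with `n` pieces and slopes at most one in absolute
value, then the Fourier coefficient of `exp (iλφ)` at `k` gets at most `O(1 / (1 + |k - k₀|))` from
each piece, with `k₀` the integer nearest to `λ` times the slope. Summing over `|k| ≤ λ²` costs
`O(n log |λ|)`, while Parseval's identity for the derivative and the Cauchy-Schwarz inequality bound
the sum over `|k| > λ²` by a constant.

The function `G` is built so that step functions with at most `N * 2 ^ N` jumps approximate it in
`L¹` within `O(ε N)`, for any prescribed sequence `ε` decreasing in `N`. A Fourier series argument
as above shows that the corresponding piecewise linear `φ_N` satisfies `‖φ - φ_N‖ = O(√(ε N))` in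
the Banach algebra `A₁`, so that `exp (iλ(φ - φ_N))` has bounded norm as long as `λ² ε N ≤ 1`. If
`ε` decreases fast enough, every large `|λ|` admits an `N` with `λ² ε N ≤ 1` for which
`N * 2 ^ N + 1` is still at most `γ |λ|`. -/

/-! ### The Fourier algebra norm -/

lemma ApNorm_one (f : ℝ → ℂ) : ApNorm 1 f = ∑' k : ℤ, ‖fourierCoef f k‖ₑ := by
  simp [ApNorm, enorm_eq_nnnorm]

lemma norm_exp_neg_I_mul (k : ℤ) (t : ℝ) :
    ‖Complex.exp (-Complex.I * (k : ℂ) * (t : ℂ))‖ = 1 := by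
  have : -Complex.I * (k : ℂ) * (t : ℂ) = ((-(k * t) : ℝ) : ℂ) * Complex.I := by push_cast; ring
  rw [this, Complex.norm_exp_ofReal_mul_I]

lemma norm_fourierCoef (f : ℝ → ℂ) (k : ℤ) :
    ‖fourierCoef f k‖ =
      (2 * π)⁻¹ * ‖∫ t in (0 : ℝ)..(2 * π), f t * Complex.exp (-Complex.I * k * t)‖ := by
  simp [fourierCoef, abs_of_pos pi_pos]

lemma fourier_two_pi_neg (k : ℤ) (t : ℝ) :
    fourier (-k) (t : AddCircle (2 * π)) = Complex.exp (-Complex.I * k * t) := by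
  rw [fourier_coe_apply]
  congr 1
  push_cast
  field_simp

lemma fourierCoef_eq_fourierCoeffOn (f : ℝ → ℂ) (k : ℤ) :
    fourierCoef f k = fourierCoeffOn two_pi_pos f k := by
  rw [fourierCoeffOn_eq_integral, fourierCoef, sub_zero]
  simp only [fourier_two_pi_neg, smul_eq_mul, mul_comm (Complex.exp _), Complex.real_smul]
  push_cast
  rfl

lemma fourierCoef_eq_fourierCoeff [Fact (0 < 2 * π)] (f : AddCircle (2 * π) → ℂ) (k : ℤ) :
    fourierCoef (fun t ↦ f t) k = fourierCoeff f k := by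
  rw [fourierCoeff_eq_intervalIntegral f k 0, fourierCoef, zero_add]
  simp only [fourier_two_pi_neg, smul_eq_mul, mul_comm (Complex.exp _), Complex.real_smul]
  push_cast
  rfl

lemma hasSum_fourierCoef {g : ℝ → ℂ} (hg : Continuous g) (hper : Function.Periodic g (2 * π))
    (hfin : ApNorm 1 g ≠ ∞) (t : ℝ) :
    HasSum (fun n : ℤ ↦ fourierCoef g n * Complex.exp (Complex.I * n * t)) (g t) := by
  have : Fact (0 < 2 * π) := ⟨two_pi_pos⟩
  let G : C(AddCircle (2 * π), ℂ) := ⟨hper.lift, hg.quotient_lift _⟩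
  have hcoef (n : ℤ) : fourierCoeff G n = fourierCoef g n :=
    (fourierCoef_eq_fourierCoeff hper.lift n).symm
  have hsum : Summable (fourierCoeff G) := by
    rw [ApNorm_one] at hfin
    simpa only [funext hcoef] using (tsum_enorm_ne_top_iff_summable_norm.mp hfin).of_norm
  have := has_pointwise_sum_fourier_series_of_summable hsum (t : AddCircle (2 * π))
  convert this using 2 with n
  swap; · rfl
  rw [hcoef, smul_eq_mul, fourier_coe_apply]
  congr 2
  push_cast
  field_simp

lemma ApNorm_const_mul (c : ℂ) (f : ℝ → ℂ) :
    ApNorm 1 (fun t ↦ c * f t) = ‖c‖ₑ * ApNorm 1 f := by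
  have hcoef (k : ℤ) : fourierCoef (fun t ↦ c * f t) k = c * fourierCoef f k := by
    simp only [fourierCoef, mul_assoc c, intervalIntegral.integral_const_mul]
    ring
  simp_rw [ApNorm_one, hcoef, enorm_mul, ENNReal.tsum_mul_left]

lemma ApNorm_mul_exp_I_mul (n : ℤ) (f : ℝ → ℂ) :
    ApNorm 1 (fun t ↦ f t * Complex.exp (Complex.I * n * t)) = ApNorm 1 f := by
  have hcoef (k : ℤ) : fourierCoef (fun t ↦ f t * Complex.exp (Complex.I * n * t)) k =
      fourierCoef f (k - n) := by
    simp only [fourierCoef, mul_assoc (f _), ← Complex.exp_add]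
    congr! 4
    push_cast
    ring_nf
  simp_rw [ApNorm_one, hcoef]
  exact (Equiv.subRight n).tsum_eq fun k ↦ ‖fourierCoef f k‖ₑ

lemma ApNorm_le_tsum {ι : Type*} [Countable ι] {F : ι → ℝ → ℂ} {G : ℝ → ℂ} {B : ι → ℝ}
    (hF : ∀ i, Continuous (F i)) (hB : ∀ i, ∀ t ∈ Icc 0 (2 * π), ‖F i t‖ ≤ B i)
    (hs : Summable B) (hG : ∀ t ∈ Icc 0 (2 * π), HasSum (F · t) (G t)) :
    ApNorm 1 G ≤ ∑' i, ApNorm 1 (F i) := by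
  have hmem {t : ℝ} (ht : t ∈ uIoc 0 (2 * π)) : t ∈ Icc 0 (2 * π) :=
    Ioc_subset_Icc_self (uIoc_of_le two_pi_pos.le ▸ ht)
  have hcoef (k : ℤ) : fourierCoef G k = ∑' i, fourierCoef (F i) k := by
    have hsum := intervalIntegral.hasSum_integral_of_dominated_convergence (μ := volume)
      (F := fun i t ↦ F i t * Complex.exp (-Complex.I * k * t))
      (f := fun t ↦ G t * Complex.exp (-Complex.I * k * t)) (a := 0) (b := 2 * π)
      (fun i _ ↦ B i) (fun i ↦ Continuous.aestronglyMeasurable (by have := hF i; fun_prop))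
      (fun i ↦ ae_of_all _ fun t ht ↦ ?_) (ae_of_all _ fun _ _ ↦ hs) intervalIntegrable_const
      (ae_of_all _ fun t ht ↦ (hG t (hmem ht)).mul_right _)
    · simp only [fourierCoef, ← hsum.tsum_eq, tsum_mul_left]
    · rw [norm_mul, norm_exp_neg_I_mul, mul_one]
      exact hB i t (hmem ht)
  calc ApNorm 1 G = ∑' k : ℤ, ‖∑' i, fourierCoef (F i) k‖ₑ := by simp_rw [ApNorm_one, hcoef]
    _ ≤ ∑' k : ℤ, ∑' i, ‖fourierCoef (F i) k‖ₑ :=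
        ENNReal.tsum_le_tsum fun k ↦ enorm_tsum_le_tsum_enorm
    _ = ∑' i, ∑' k : ℤ, ‖fourierCoef (F i) k‖ₑ := ENNReal.tsum_comm
    _ = ∑' i, ApNorm 1 (F i) := by simp_rw [ApNorm_one]

lemma exists_forall_norm_le_Icc {f : ℝ → ℂ} (hf : Continuous f) (a b : ℝ) :
    ∃ K, 0 ≤ K ∧ ∀ t ∈ Icc a b, ‖f t‖ ≤ K := by
  obtain ⟨K, hK⟩ := isCompact_Icc.exists_bound_of_continuousOn (s := Icc a b) hf.continuousOn
  exact ⟨max K 0, le_max_right _ _, fun t ht ↦ (hK t ht).trans (le_max_left _ _)⟩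

lemma ApNorm_mul_le {f g : ℝ → ℂ} (hf : Continuous f) (hg : Continuous g)
    (hper : Function.Periodic g (2 * π)) (hfin : ApNorm 1 g ≠ ∞) :
    ApNorm 1 (fun t ↦ f t * g t) ≤ ApNorm 1 f * ApNorm 1 g := by
  obtain ⟨K, hK0, hK⟩ := exists_forall_norm_le_Icc hf 0 (2 * π)
  have hs : Summable fun n ↦ ‖fourierCoef g n‖ := by
    rw [ApNorm_one] at hfin
    exact tsum_enorm_ne_top_iff_summable_norm.mp hfin
  calc ApNorm 1 (fun t ↦ f t * g t)
      ≤ ∑' n : ℤ, ApNorm 1 fun t ↦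
          fourierCoef g n * (f t * Complex.exp (Complex.I * n * t)) := by
        refine ApNorm_le_tsum (B := fun n ↦ ‖fourierCoef g n‖ * K) (fun n ↦ by fun_prop)
          (fun n t ht ↦ ?_) (hs.mul_right K) fun t _ ↦ ?_
        · have hexp : ‖Complex.exp (Complex.I * n * t)‖ = 1 := by
            simpa using norm_exp_neg_I_mul (-n) t
          rw [norm_mul, norm_mul, hexp, mul_one]
          exact mul_le_mul_of_nonneg_left (hK t ht) (norm_nonneg _)
        · simpa only [mul_left_comm] using (hasSum_fourierCoef hg hper hfin t).mul_left (f t)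
    _ = ApNorm 1 f * ApNorm 1 g := by
        simp_rw [ApNorm_const_mul, ApNorm_mul_exp_I_mul, ENNReal.tsum_mul_right, ← ApNorm_one,
          mul_comm]

lemma ApNorm_mul_pow_le {f g : ℝ → ℂ} (hf : Continuous f) (hg : Continuous g)
    (hper : Function.Periodic g (2 * π)) (hfin : ApNorm 1 g ≠ ∞) (n : ℕ) :
    ApNorm 1 (fun t ↦ f t * g t ^ n) ≤ ApNorm 1 f * ApNorm 1 g ^ n := by
  induction n with
  | zero => simp
  | succ n ih =>
    simp_rw [pow_succ, ← mul_assoc]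
    exact (ApNorm_mul_le (by fun_prop) hg hper hfin).trans (by gcongr)

lemma ApNorm_mul_exp_le {f g : ℝ → ℂ} (hf : Continuous f) (hg : Continuous g)
    (hper : Function.Periodic g (2 * π)) (hfin : ApNorm 1 g ≠ ∞) :
    ApNorm 1 (fun t ↦ f t * Complex.exp (g t)) ≤
      ApNorm 1 f * ENNReal.ofReal (Real.exp (ApNorm 1 g).toReal) := by
  obtain ⟨K, hK0, hK⟩ := exists_forall_norm_le_Icc hf 0 (2 * π)
  obtain ⟨R, -, hR⟩ := exists_forall_norm_le_Icc hg 0 (2 * π)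
  calc ApNorm 1 (fun t ↦ f t * Complex.exp (g t))
      ≤ ∑' n : ℕ, ApNorm 1 fun t ↦ (n.factorial : ℂ)⁻¹ * (f t * g t ^ n) := by
        refine ApNorm_le_tsum (B := fun n ↦ K * (R ^ n / n.factorial)) (fun n ↦ by fun_prop)
          (fun n t ht ↦ ?_) ((Real.summable_pow_div_factorial R).mul_left K) fun t _ ↦ ?_
        · have := mul_le_mul (hK t ht) (pow_le_pow_left₀ (norm_nonneg _) (hR t ht) n)
            (by positivity) hK0
          simpa [div_eq_inv_mul, mul_left_comm] using
            mul_le_mul_of_nonneg_left this (inv_nonneg.mpr n.factorial.cast_nonneg)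
        · have := (NormedSpace.expSeries_div_hasSum_exp (g t)).mul_left (f t)
          simpa only [Complex.exp_eq_exp_ℂ, div_eq_inv_mul, mul_left_comm] using this
    _ ≤ ∑' n : ℕ, ApNorm 1 f * ENNReal.ofReal ((ApNorm 1 g).toReal ^ n / n.factorial) := by
        refine ENNReal.tsum_le_tsum fun n ↦ ?_
        have hinv : ‖(n.factorial : ℂ)⁻¹‖ₑ = ENNReal.ofReal (n.factorial : ℝ)⁻¹ := by
          rw [← ofReal_norm, norm_inv, Complex.norm_natCast]
        rw [ApNorm_const_mul, hinv, div_eq_inv_mul, ENNReal.ofReal_mul (by positivity),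
          ENNReal.ofReal_pow ENNReal.toReal_nonneg, ENNReal.ofReal_toReal hfin, mul_left_comm]
        gcongr
        exact ApNorm_mul_pow_le hf hg hper hfin n
    _ = ApNorm 1 f * ENNReal.ofReal (Real.exp (ApNorm 1 g).toReal) := by
        rw [ENNReal.tsum_mul_left, ← ENNReal.ofReal_tsum_of_nonneg (fun n ↦ by positivity)
          (Real.summable_pow_div_factorial _), Real.exp_eq_exp_ℝ,
          (NormedSpace.expSeries_div_hasSum_exp _).tsum_eq]

lemma sum_comp_natAbs_le {g : ℕ → ℝ} (hg : ∀ n, 0 ≤ g n) (s : Finset ℤ) :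
    ∑ k ∈ s, g k.natAbs ≤ 2 * ∑ n ∈ s.image Int.natAbs, g n := by
  rw [Finset.sum_comp g Int.natAbs, Finset.mul_sum]
  refine Finset.sum_le_sum fun n _ ↦ ?_
  rw [nsmul_eq_mul]
  have hfiber : s.filter (·.natAbs = n) ⊆ ({(n : ℤ), -(n : ℤ)} : Finset ℤ) := fun k hk ↦ by
    simpa using Int.natAbs_eq_iff.mp (Finset.mem_filter.mp hk).2
  gcongr
  · exact hg n
  · exact_mod_cast (Finset.card_le_card hfiber).trans Finset.card_le_two

lemma sum_inv_sq_int_le {M : ℕ} {s : Finset ℤ} (hs : ∀ k ∈ s, M < k.natAbs) :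
    ∑ k ∈ s, ((k : ℝ) ^ 2)⁻¹ ≤ 4 / (M + 1) := by
  have himage : s.image Int.natAbs ⊆ Finset.Ioo M (s.sup Int.natAbs + 1) := by
    intro n hn
    obtain ⟨k, hk, rfl⟩ := Finset.mem_image.mp hn
    exact Finset.mem_Ioo.mpr ⟨hs k hk, Nat.lt_succ_of_le (Finset.le_sup (f := Int.natAbs) hk)⟩
  calc ∑ k ∈ s, ((k : ℝ) ^ 2)⁻¹ = ∑ k ∈ s, ((k.natAbs : ℝ) ^ 2)⁻¹ := by
        simp only [Nat.cast_natAbs, Int.cast_abs, sq_abs]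
    _ ≤ 2 * ∑ n ∈ s.image Int.natAbs, ((n : ℝ) ^ 2)⁻¹ :=
        sum_comp_natAbs_le (g := fun n ↦ ((n : ℝ) ^ 2)⁻¹) (fun n ↦ by positivity) s
    _ ≤ 2 * ∑ n ∈ Finset.Ioo M (s.sup Int.natAbs + 1), ((n : ℝ) ^ 2)⁻¹ := by
        gcongr
    _ ≤ 2 * (2 / (M + 1)) := by gcongr; exact sum_Ioo_inv_sq_le M _
    _ = 4 / (M + 1) := by ring

section Derivative

variable {F w : ℝ → ℂ} {D : Set ℝ}

lemma fourierCoef_deriv (hD : D.Countable) (hF : ContinuousOn F (Icc 0 (2 * π)))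
    (hderiv : ∀ t ∈ Ioo 0 (2 * π) \ D, HasDerivAt F (w t) t)
    (hw : IntervalIntegrable w volume 0 (2 * π)) (hper : F 0 = F (2 * π)) (k : ℤ) :
    fourierCoef w k = Complex.I * k * fourierCoef F k := by
  set e : ℝ → ℂ := fun t ↦ Complex.exp (-Complex.I * k * t)
  have he (t : ℝ) : HasDerivAt e (-Complex.I * k * e t) t := by
    have := ((Complex.ofRealCLM.hasDerivAt (x := t)).const_mul (-Complex.I * (k : ℂ))).cexp
    simpa [e, mul_comm] using this
  have hec : Continuous e := by fun_prop
  have hFi : IntervalIntegrable F volume 0 (2 * π) := hF.intervalIntegrable_of_Icc two_pi_pos.le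
  have hbdry : F (2 * π) * e (2 * π) - F 0 * e 0 = 0 := by
    have : e (2 * π) = e 0 := by
      have := Complex.exp_int_mul_two_pi_mul_I (-k)
      simp only [e]
      rw [← sub_eq_zero, Complex.ofReal_zero, mul_zero, Complex.exp_zero, ← this]
      push_cast
      ring_nf
    rw [this, hper, sub_self]
  have hparts := MeasureTheory.integral_eq_of_hasDerivAt_off_countable_of_le
    (fun t ↦ F t * e t) (fun t ↦ w t * e t + F t * (-Complex.I * k * e t)) two_pi_pos.le hD
    (hF.mul hec.continuousOn) (fun t ht ↦ (hderiv t ht).mul (he t))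
    ((hw.mul_continuousOn hec.continuousOn).add
      (hFi.mul_continuousOn (hec.const_mul _).continuousOn))
  rw [hbdry, intervalIntegral.integral_add (hw.mul_continuousOn hec.continuousOn)
    (hFi.mul_continuousOn (hec.const_mul _).continuousOn)] at hparts
  simp only [mul_left_comm (F _), intervalIntegral.integral_const_mul] at hparts
  simp only [fourierCoef]
  linear_combination (1 / (2 * (π : ℂ))) * hparts

lemma sum_norm_fourierCoef_le (hD : D.Countable) (hF : ContinuousOn F (Icc 0 (2 * π)))
    (hderiv : ∀ t ∈ Ioo 0 (2 * π) \ D, HasDerivAt F (w t) t)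
    (hw : MemLp w 2 (volume.restrict (Ioc 0 (2 * π)))) (hper : F 0 = F (2 * π))
    {M : ℕ} {s : Finset ℤ} (hs : ∀ k ∈ s, M < k.natAbs) :
    ∑ k ∈ s, ‖fourierCoef F k‖ ≤
      2 / √(M + 1) * √((2 * π)⁻¹ * ∫ t in (0 : ℝ)..(2 * π), ‖w t‖ ^ 2) := by
  have hwi : IntervalIntegrable w volume 0 (2 * π) :=
    (intervalIntegrable_iff_integrableOn_Ioc_of_le two_pi_pos.le).mpr
      (hw.integrable (by norm_num))
  have hcoef (k : ℤ) (hk : k ∈ s) : ‖fourierCoef F k‖ = |(k : ℝ)|⁻¹ * ‖fourierCoef w k‖ := by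
    have hk0 : (k : ℝ) ≠ 0 := by
      have := hs k hk
      exact_mod_cast (by omega : k ≠ 0)
    rw [fourierCoef_deriv hD hF hderiv hwi hper, norm_mul, norm_mul, Complex.norm_I, one_mul,
      Complex.norm_intCast, inv_mul_cancel_left₀ (abs_ne_zero.mpr hk0)]
  have hparseval : ∑ k ∈ s, ‖fourierCoef w k‖ ^ 2 ≤
      (2 * π)⁻¹ * ∫ t in (0 : ℝ)..(2 * π), ‖w t‖ ^ 2 := by
    have hsum := hasSum_sq_fourierCoeffOn two_pi_pos hw
    simp only [← fourierCoef_eq_fourierCoeffOn, sub_zero, smul_eq_mul] at hsum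
    exact sum_le_hasSum s (fun _ _ ↦ by positivity) hsum
  calc ∑ k ∈ s, ‖fourierCoef F k‖ = ∑ k ∈ s, |(k : ℝ)|⁻¹ * ‖fourierCoef w k‖ :=
        Finset.sum_congr rfl hcoef
    _ ≤ √(∑ k ∈ s, |(k : ℝ)|⁻¹ ^ 2) * √(∑ k ∈ s, ‖fourierCoef w k‖ ^ 2) :=
        Real.sum_mul_le_sqrt_mul_sqrt s _ _
    _ ≤ √(4 / (M + 1)) * √((2 * π)⁻¹ * ∫ t in (0 : ℝ)..(2 * π), ‖w t‖ ^ 2) := by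
        gcongr
        simpa only [inv_pow, sq_abs] using sum_inv_sq_int_le hs
    _ = 2 / √(M + 1) * √((2 * π)⁻¹ * ∫ t in (0 : ℝ)..(2 * π), ‖w t‖ ^ 2) := by
        rw [sqrt_div (by norm_num), show (4 : ℝ) = 2 ^ 2 by norm_num, sqrt_sq (by norm_num)]

lemma ApNorm_le_sum_Icc_add (hD : D.Countable) (hF : ContinuousOn F (Icc 0 (2 * π)))
    (hderiv : ∀ t ∈ Ioo 0 (2 * π) \ D, HasDerivAt F (w t) t)
    (hw : MemLp w 2 (volume.restrict (Ioc 0 (2 * π)))) (hper : F 0 = F (2 * π)) (M : ℕ) :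
    ApNorm 1 F ≤ ENNReal.ofReal (∑ k ∈ Finset.Icc (-M : ℤ) M, ‖fourierCoef F k‖ +
      2 / √(M + 1) * √((2 * π)⁻¹ * ∫ t in (0 : ℝ)..(2 * π), ‖w t‖ ^ 2)) := by
  rw [ApNorm_one, ENNReal.tsum_eq_iSup_sum]
  refine iSup_le fun s ↦ ?_
  simp_rw [← ofReal_norm]
  rw [← ENNReal.ofReal_sum_of_nonneg fun _ _ ↦ norm_nonneg _]
  refine ENNReal.ofReal_le_ofReal ?_
  rw [← Finset.sum_inter_add_sum_sdiff s (Finset.Icc (-M : ℤ) M)]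
  refine add_le_add (Finset.sum_le_sum_of_subset_of_nonneg Finset.inter_subset_right
    fun _ _ _ ↦ norm_nonneg _) (sum_norm_fourierCoef_le hD hF hderiv hw hper fun k hk ↦ ?_)
  have := (Finset.mem_sdiff.mp hk).2
  rw [Finset.mem_Icc] at this
  omega

end Derivative

/-! ### Periodic primitives -/

/-- The mean value of a `2π`-periodic function over its period. -/
noncomputable def circleMean (h : ℝ → ℝ) : ℝ :=
  (2 * π)⁻¹ * ∫ t in (0 : ℝ)..(2 * π), h t

/-- The primitive, vanishing at `0`, of `h` minus its mean. The correction by the mean makes it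
`2π`-periodic whenever `h` is. -/
noncomputable def periodicPrimitive (h : ℝ → ℝ) (t : ℝ) : ℝ :=
  ∫ s in (0 : ℝ)..t, (h s - circleMean h)

section PeriodicPrimitive

variable {h g : ℝ → ℝ}

lemma integral_sub_circleMean (hint : IntervalIntegrable h volume 0 (2 * π)) :
    ∫ t in (0 : ℝ)..(2 * π), (h t - circleMean h) = 0 := by
  rw [intervalIntegral.integral_sub hint intervalIntegrable_const,
    intervalIntegral.integral_const, circleMean, smul_eq_mul, sub_zero,
    mul_inv_cancel_left₀ two_pi_pos.ne', sub_self]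

lemma circleMean_sub (hh : IntervalIntegrable h volume 0 (2 * π))
    (hg : IntervalIntegrable g volume 0 (2 * π)) :
    circleMean (fun t ↦ h t - g t) = circleMean h - circleMean g := by
  rw [circleMean, intervalIntegral.integral_sub hh hg, mul_sub, circleMean, circleMean]

lemma circleMean_mem_Icc {a b : ℝ} (hint : IntervalIntegrable h volume 0 (2 * π))
    (hh : ∀ t, h t ∈ Icc a b) : circleMean h ∈ Icc a b := by
  have hlow := intervalIntegral.integral_mono_on two_pi_pos.le intervalIntegrable_const hint
    fun t _ ↦ (hh t).1
  have hupp := intervalIntegral.integral_mono_on two_pi_pos.le hint intervalIntegrable_const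
    fun t _ ↦ (hh t).2
  rw [intervalIntegral.integral_const, sub_zero, smul_eq_mul] at hlow hupp
  rw [circleMean, inv_mul_eq_div]
  exact ⟨(le_div_iff₀' two_pi_pos).mpr hlow, (div_le_iff₀' two_pi_pos).mpr hupp⟩

lemma abs_sub_circleMean_le (hint : IntervalIntegrable h volume 0 (2 * π)) {a b : ℝ}
    (hh : ∀ t, h t ∈ Icc a b) (t : ℝ) : |h t - circleMean h| ≤ b - a := by
  obtain ⟨hlow, hupp⟩ := circleMean_mem_Icc hint hh
  exact abs_le.mpr ⟨by linarith [(hh t).1], by linarith [(hh t).2]⟩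

lemma periodicPrimitive_zero (h : ℝ → ℝ) : periodicPrimitive h 0 = 0 :=
  intervalIntegral.integral_same

lemma periodicPrimitive_two_pi (hint : IntervalIntegrable h volume 0 (2 * π)) :
    periodicPrimitive h (2 * π) = 0 := integral_sub_circleMean hint

variable (hint : ∀ a b, IntervalIntegrable h volume a b)

include hint

lemma periodicPrimitive_sub_periodicPrimitive (x y : ℝ) :
    periodicPrimitive h y - periodicPrimitive h x = ∫ t in x..y, (h t - circleMean h) :=
  intervalIntegral.integral_interval_sub_left
    ((hint _ _).sub intervalIntegrable_const) ((hint _ _).sub intervalIntegrable_const)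

lemma periodicPrimitive_sub (hg : ∀ a b, IntervalIntegrable g volume a b) (t : ℝ) :
    periodicPrimitive (fun s ↦ h s - g s) t = periodicPrimitive h t - periodicPrimitive g t := by
  simp only [periodicPrimitive]
  rw [← intervalIntegral.integral_sub ((hint _ _).sub intervalIntegrable_const)
    ((hg _ _).sub intervalIntegrable_const), circleMean_sub (hint _ _) (hg _ _)]
  congr! 2
  ring

lemma continuous_periodicPrimitive : Continuous (periodicPrimitive h) :=
  intervalIntegral.continuous_primitive
    (fun a b ↦ (hint a b).sub intervalIntegrable_const) 0

lemma periodic_periodicPrimitive (hper : Function.Periodic h (2 * π)) :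
    Function.Periodic (periodicPrimitive h) (2 * π) := by
  have hper' : Function.Periodic (fun s ↦ h s - circleMean h) (2 * π) := fun t ↦ by
    simp only [hper t]
  intro t
  rw [← sub_eq_zero, periodicPrimitive_sub_periodicPrimitive hint,
    hper'.intervalIntegral_add_eq t 0, zero_add, integral_sub_circleMean (hint _ _)]

lemma hasDerivAt_periodicPrimitive (hmeas : Measurable h) {t : ℝ} (hcont : ContinuousAt h t) :
    HasDerivAt (periodicPrimitive h) (h t - circleMean h) t :=
  intervalIntegral.integral_hasDerivAt_right ((hint _ _).sub intervalIntegrable_const)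
    (hmeas.sub_const _).stronglyMeasurable.stronglyMeasurableAtFilter
    (hcont.sub continuousAt_const)

omit hint

lemma deriv_periodicPrimitive (hh : Continuous h) :
    deriv (periodicPrimitive h) = fun t ↦ h t - circleMean h :=
  funext fun _ ↦ (hasDerivAt_periodicPrimitive (fun _ _ ↦ hh.intervalIntegrable _ _) hh.measurable
    hh.continuousAt).deriv

lemma contDiff_one_periodicPrimitive (hh : Continuous h) : ContDiff ℝ 1 (periodicPrimitive h) := by
  refine contDiff_one_iff_deriv.mpr ⟨fun t ↦ ?_, ?_⟩
  · exact (hasDerivAt_periodicPrimitive (fun _ _ ↦ hh.intervalIntegrable _ _) hh.measurable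
      hh.continuousAt).differentiableAt
  · rw [deriv_periodicPrimitive hh]
    fun_prop

lemma eqOn_const_of_periodicPrimitive_affine (hh : Continuous h) {u v a b : ℝ}
    (hlin : ∀ t ∈ Ioo u v, periodicPrimitive h t = a * t + b) :
    EqOn h (fun _ ↦ a + circleMean h) (Ioo u v) := by
  intro t ht
  have haff : HasDerivAt (fun t ↦ a * t + b) a t := by
    simpa using ((hasDerivAt_id t).const_mul a).add_const b
  have heq : periodicPrimitive h =ᶠ[nhds t] fun t ↦ a * t + b :=
    Filter.eventuallyEq_of_mem (isOpen_Ioo.mem_nhds ht) hlin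
  have := (haff.congr_of_eventuallyEq heq).deriv
  rw [deriv_periodicPrimitive hh] at this
  exact sub_eq_iff_eq_add.mp this

lemma integral_abs_sub_circleMean_le (hint : IntervalIntegrable h volume 0 (2 * π)) :
    ∫ t in (0 : ℝ)..(2 * π), |h t - circleMean h| ≤ 2 * ∫ t in (0 : ℝ)..(2 * π), |h t| := by
  have hmean : 2 * π * |circleMean h| ≤ ∫ t in (0 : ℝ)..(2 * π), |h t| := by
    rw [circleMean, abs_mul, abs_of_pos (inv_pos.mpr two_pi_pos),
      mul_inv_cancel_left₀ two_pi_pos.ne']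
    exact intervalIntegral.abs_integral_le_integral_abs two_pi_pos.le
  calc ∫ t in (0 : ℝ)..(2 * π), |h t - circleMean h|
      ≤ ∫ t in (0 : ℝ)..(2 * π), (|h t| + |circleMean h|) :=
        intervalIntegral.integral_mono_on two_pi_pos.le
          (hint.sub intervalIntegrable_const).abs (hint.abs.add intervalIntegrable_const)
          fun t _ ↦ abs_sub _ _
    _ = (∫ t in (0 : ℝ)..(2 * π), |h t|) + 2 * π * |circleMean h| := by
        rw [intervalIntegral.integral_add hint.abs intervalIntegrable_const,
          intervalIntegral.integral_const, smul_eq_mul, sub_zero]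
    _ ≤ 2 * ∫ t in (0 : ℝ)..(2 * π), |h t| := by linarith

lemma abs_periodicPrimitive_le (hint : IntervalIntegrable h volume 0 (2 * π)) {t : ℝ}
    (ht : t ∈ Icc 0 (2 * π)) :
    |periodicPrimitive h t| ≤ 2 * ∫ s in (0 : ℝ)..(2 * π), |h s| :=
  calc |periodicPrimitive h t| ≤ ∫ s in (0 : ℝ)..t, |h s - circleMean h| :=
        intervalIntegral.abs_integral_le_integral_abs ht.1
    _ ≤ ∫ s in (0 : ℝ)..(2 * π), |h s - circleMean h| :=
        intervalIntegral.integral_mono_interval le_rfl ht.1 ht.2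
          (Filter.Eventually.of_forall fun _ ↦ abs_nonneg _)
          (hint.sub intervalIntegrable_const).abs
    _ ≤ 2 * ∫ s in (0 : ℝ)..(2 * π), |h s| := integral_abs_sub_circleMean_le hint

end PeriodicPrimitive

lemma norm_fourierCoef_le {f : ℝ → ℂ} {K : ℝ} (hf : ∀ t ∈ Icc 0 (2 * π), ‖f t‖ ≤ K) (k : ℤ) :
    ‖fourierCoef f k‖ ≤ K := by
  have hint : ‖∫ t in (0 : ℝ)..(2 * π), f t * Complex.exp (-Complex.I * k * t)‖ ≤
      K * |2 * π - 0| := by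
    refine intervalIntegral.norm_integral_le_of_norm_le_const fun t ht ↦ ?_
    rw [uIoc_of_le two_pi_pos.le] at ht
    rw [norm_mul, norm_exp_neg_I_mul, mul_one]
    exact hf t (Ioc_subset_Icc_self ht)
  rw [sub_zero, abs_of_pos two_pi_pos] at hint
  rw [norm_fourierCoef, inv_mul_le_iff₀ two_pi_pos]
  linarith

lemma intervalIntegrable_of_mem_Icc {h : ℝ → ℝ} (hmeas : Measurable h) {c d : ℝ}
    (hh : ∀ t, h t ∈ Icc c d) (a b : ℝ) : IntervalIntegrable h volume a b :=
  intervalIntegrable_const (c := max |c| |d|) |>.mono_fun hmeas.aestronglyMeasurable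
    (ae_of_all _ fun t ↦ (abs_le_max_abs_abs (hh t).1 (hh t).2).trans (le_abs_self _))

lemma integral_sq_sub_circleMean_le {h : ℝ → ℝ} (hmeas : Measurable h)
    (hh : ∀ t, h t ∈ Icc (-1) 1) :
    (2 * π)⁻¹ * ∫ t in (0 : ℝ)..(2 * π), |h t - circleMean h| ^ 2 ≤
      ∫ t in (0 : ℝ)..(2 * π), |h t| := by
  have hint := intervalIntegrable_of_mem_Icc hmeas hh 0 (2 * π)
  have hbound (t : ℝ) : |h t - circleMean h| ≤ 2 := by
    linarith [abs_sub_circleMean_le hint hh t]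
  have hsq_le (t : ℝ) : |h t - circleMean h| ^ 2 ≤ 2 * |h t - circleMean h| := by
    nlinarith [hbound t, abs_nonneg (h t - circleMean h)]
  have hsq_int : IntervalIntegrable (fun t ↦ |h t - circleMean h| ^ 2) volume 0 (2 * π) :=
    intervalIntegrable_of_mem_Icc (c := 0) (d := 4) (by fun_prop)
      (fun t ↦ ⟨by positivity, by linarith [hsq_le t, hbound t]⟩) _ _
  have hsq : ∫ t in (0 : ℝ)..(2 * π), |h t - circleMean h| ^ 2 ≤
      2 * ∫ t in (0 : ℝ)..(2 * π), |h t - circleMean h| := by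
    rw [← intervalIntegral.integral_const_mul]
    exact intervalIntegral.integral_mono_on two_pi_pos.le hsq_int
      ((hint.sub intervalIntegrable_const).abs.const_mul 2) fun t _ ↦ hsq_le t
  have hδ : 0 ≤ ∫ t in (0 : ℝ)..(2 * π), |h t| :=
    intervalIntegral.integral_nonneg two_pi_pos.le fun _ _ ↦ abs_nonneg _
  rw [inv_mul_le_iff₀ two_pi_pos]
  nlinarith [integral_abs_sub_circleMean_le hint, pi_gt_three]

lemma ApNorm_periodicPrimitive_le {h : ℝ → ℝ} (hmeas : Measurable h) (hh : ∀ t, h t ∈ Icc (-1) 1)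
    {D : Set ℝ} (hD : D.Countable) (hcont : ∀ t ∈ Ioo 0 (2 * π) \ D, ContinuousAt h t) :
    ApNorm 1 (fun t ↦ (periodicPrimitive h t : ℂ)) ≤
      ENNReal.ofReal (2 * (∫ t in (0 : ℝ)..(2 * π), |h t|) +
        2 * √(∫ t in (0 : ℝ)..(2 * π), |h t|)) := by
  have hint := intervalIntegrable_of_mem_Icc hmeas hh
  have hL2 : MemLp (fun t ↦ ((h t - circleMean h : ℝ) : ℂ)) 2
      (volume.restrict (Ioc 0 (2 * π))) :=
    MemLp.of_bound (by fun_prop) (1 - -1) (ae_of_all _ fun t ↦ by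
      rw [Complex.norm_real]
      exact abs_sub_circleMean_le (hint _ _) hh t)
  refine (ApNorm_le_sum_Icc_add (M := 0) hD
    (Complex.continuous_ofReal.comp (continuous_periodicPrimitive hint)).continuousOn
    (fun t ht ↦ (hasDerivAt_periodicPrimitive hint hmeas (hcont t ht)).ofReal_comp) hL2
    (by simp [periodicPrimitive_zero, periodicPrimitive_two_pi (hint _ _)])).trans
    (ENNReal.ofReal_le_ofReal (add_le_add ?_ ?_))
  · simp only [CharP.cast_eq_zero, neg_zero, Finset.Icc_self, Finset.sum_singleton]
    refine norm_fourierCoef_le (fun t ht ↦ ?_) 0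
    simpa using abs_periodicPrimitive_le (hint _ _) ht
  · simp only [CharP.cast_eq_zero, zero_add, sqrt_one, div_one, Complex.norm_real, norm_eq_abs]
    gcongr
    exact integral_sq_sub_circleMean_le hmeas hh

/-! ### Exponentials of piecewise linear functions -/

lemma le_card_add_one_mul {Q : ℝ → ℝ → ℝ} {K : ℝ} (hK0 : 0 ≤ K)
    (hadd : ∀ x y z, Q x z ≤ Q x y + Q y z) (B : Finset ℝ) {a b : ℝ} (hab : a ≤ b)
    (hK : ∀ x y, a ≤ x → x ≤ y → y ≤ b → Disjoint (Ioo x y) B → Q x y ≤ K) :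
    Q a b ≤ (B.card + 1) * K := by
  induction B using Finset.induction_on_max generalizing b with
  | empty => simpa using hK a b le_rfl hab le_rfl (by simp)
  | insert m B hmax ih =>
    rw [Finset.card_insert_of_notMem fun hm ↦ (hmax m hm).false]
    push_cast
    by_cases hm : m ∈ Ioo a b
    · have hleft : Q a m ≤ (B.card + 1) * K := ih hm.1.le fun x y hax hxy hym hdisj ↦
        hK x y hax hxy (hym.trans hm.2.le) <| by
          rw [Finset.coe_insert, disjoint_insert_right]
          exact ⟨fun h ↦ h.2.not_ge hym, hdisj⟩
      have hright : Q m b ≤ K := hK m b hm.1.le hm.2.le le_rfl <| by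
        rw [Finset.coe_insert, disjoint_insert_right]
        exact ⟨fun h ↦ h.1.false,
          disjoint_right.mpr fun c hc hcm ↦ (hmax c hc).not_gt hcm.1⟩
      linarith [hadd a m b]
    · have hall : Q a b ≤ (B.card + 1) * K := ih hab fun x y hax hxy hyb hdisj ↦
        hK x y hax hxy hyb <| by
          rw [Finset.coe_insert, disjoint_insert_right]
          exact ⟨fun h ↦ hm ⟨hax.trans_lt h.1, h.2.trans_le hyb⟩, hdisj⟩
      linarith

lemma norm_integral_exp_I_mul_le {ω : ℝ} (hω : ω ≠ 0) (a b : ℝ) :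
    ‖∫ t in a..b, Complex.exp (Complex.I * ω * t)‖ ≤ 2 / |ω| := by
  have hnorm (t : ℝ) : ‖Complex.exp (Complex.I * ω * t)‖ = 1 := by
    rw [mul_assoc, ← Complex.ofReal_mul, Complex.norm_exp_I_mul_ofReal]
  rw [integral_exp_mul_complex (mul_ne_zero Complex.I_ne_zero (Complex.ofReal_ne_zero.mpr hω)),
    norm_div, norm_mul, Complex.norm_I, one_mul, Complex.norm_real, norm_eq_abs]
  gcongr
  refine (norm_sub_le _ _).trans ?_
  rw [hnorm, hnorm]
  norm_num

lemma norm_integral_exp_I_mul_sub_le (θ : ℝ) (k : ℤ) {a b : ℝ} (hab : a ≤ b)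
    (hlen : b - a ≤ 2 * π) :
    ‖∫ t in a..b, Complex.exp (Complex.I * (θ - k : ℝ) * t)‖ ≤
      7 * (max 1 (k - round θ).natAbs : ℝ)⁻¹ := by
  rcases eq_or_ne k (round θ) with hk | hk
  · have hle := intervalIntegral.norm_integral_le_of_norm_le_const (a := a) (b := b) (C := 1)
      (f := fun t : ℝ ↦ Complex.exp (Complex.I * (θ - k : ℝ) * t)) fun t _ ↦ by
        rw [mul_assoc, ← Complex.ofReal_mul, Complex.norm_exp_I_mul_ofReal]
    rw [abs_of_nonneg (sub_nonneg.mpr hab)] at hle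
    simp only [hk, sub_self, Int.natAbs_zero, Nat.cast_zero, zero_le_one, sup_of_le_left,
      inv_one, mul_one] at hle ⊢
    linarith [pi_lt_d2]
  · have hgap : (1 : ℝ) ≤ (k - round θ).natAbs := by
      exact_mod_cast Int.natAbs_pos.mpr (sub_ne_zero.mpr hk)
    have hfar : ((k - round θ).natAbs : ℝ) / 2 ≤ |θ - k| := by
      have htri := abs_sub_le (k : ℝ) θ (round θ)
      rw [abs_sub_comm (k : ℝ) θ] at htri
      have hround := abs_sub_round θ
      rw [Nat.cast_natAbs, Int.cast_abs, Int.cast_sub] at hgap ⊢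
      linarith
    have hpos : 0 < |θ - k| := by linarith
    rw [max_eq_right hgap]
    calc ‖∫ t in a..b, Complex.exp (Complex.I * (θ - k : ℝ) * t)‖ ≤ 2 / |θ - k| :=
          norm_integral_exp_I_mul_le (abs_pos.mp hpos) a b
      _ ≤ 2 / ((k - round θ).natAbs / 2 : ℝ) := by gcongr
      _ ≤ 7 * ((k - round θ).natAbs : ℝ)⁻¹ := by
          field_simp
          norm_num

lemma sum_inv_max_one_le {M : ℕ} {j : ℤ} (hj : j.natAbs ≤ M) :
    ∑ k ∈ Finset.Icc (-M : ℤ) M, (max 1 (k - j).natAbs : ℝ)⁻¹ ≤ 4 + 2 * Real.log (2 * M) := by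
  have himage : ((Finset.Icc (-M : ℤ) M).image (· - j)).image Int.natAbs ⊆
      Finset.range (2 * M + 1) := by
    intro n hn
    simp only [Finset.mem_image, Finset.mem_Icc, exists_exists_and_eq_and] at hn
    obtain ⟨k, hk, rfl⟩ := hn
    rw [Finset.mem_range]
    omega
  calc ∑ k ∈ Finset.Icc (-M : ℤ) M, (max 1 (k - j).natAbs : ℝ)⁻¹
      = ∑ k ∈ (Finset.Icc (-M : ℤ) M).image (· - j), (max 1 k.natAbs : ℝ)⁻¹ :=
        (Finset.sum_image (f := fun k : ℤ ↦ (max 1 k.natAbs : ℝ)⁻¹)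
          fun _ _ _ _ ↦ sub_left_inj.mp).symm
    _ ≤ 2 * ∑ n ∈ ((Finset.Icc (-M : ℤ) M).image (· - j)).image Int.natAbs, (max 1 n : ℝ)⁻¹ :=
        sum_comp_natAbs_le (g := fun n ↦ (max 1 n : ℝ)⁻¹) (fun _ ↦ by positivity) _
    _ ≤ 2 * ∑ n ∈ Finset.range (2 * M + 1), (max 1 n : ℝ)⁻¹ := by
        gcongr
    _ = 2 * (harmonic (2 * M) + 1) := by
        rw [Finset.sum_range_succ', harmonic]
        push_cast
        simp
    _ ≤ 2 * (1 + Real.log (2 * M : ℕ) + 1) := by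
        gcongr
        exact harmonic_le_one_add_log _
    _ = 4 + 2 * Real.log (2 * M) := by
        push_cast
        ring

/-- `h` is a step function on `s` with breakpoints in the finite set `B`: two values agree as soon
as no breakpoint lies between (or at) the corresponding arguments. Nothing is required of the
values at the breakpoints. -/
def IsStepOn (h : ℝ → ℝ) (B : Finset ℝ) (s : Set ℝ) : Prop :=
  ∀ x ∈ s, ∀ y ∈ s, x ≤ y → Disjoint (Icc x y) B → h x = h y

namespace IsStepOn

variable {h : ℝ → ℝ} {B : Finset ℝ} {s : Set ℝ} {a b : ℝ}

lemma eq_of_mem_Ioo (hstep : IsStepOn h B s) (hs : Ioo a b ⊆ s) (hdisj : Disjoint (Ioo a b) B)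
    {x y : ℝ} (hx : x ∈ Ioo a b) (hy : y ∈ Ioo a b) : h x = h y := by
  wlog hxy : x ≤ y generalizing x y
  · exact (this hy hx (not_le.mp hxy).le).symm
  exact hstep x (hs hx) y (hs hy) hxy (hdisj.mono_left (Icc_subset_Ioo hx.1 hy.2))

lemma continuousAt (hstep : IsStepOn h B s) {t : ℝ} (hs : s ∈ nhds t) (ht : t ∉ B) :
    ContinuousAt h t := by
  have hnhds : s ∩ (B : Set ℝ)ᶜ ∈ nhds t :=
    Filter.inter_mem hs (B.finite_toSet.isClosed.isOpen_compl.mem_nhds ht)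
  obtain ⟨a, b, htab, hab⟩ := mem_nhds_iff_exists_Ioo_subset.mp hnhds
  refine (continuousAt_const (y := h t)).congr (Filter.eventually_of_mem (isOpen_Ioo.mem_nhds htab)
    fun x hx ↦ ?_)
  exact hstep.eq_of_mem_Ioo (hab.trans inter_subset_left)
    (disjoint_left.mpr fun c hc ↦ (hab hc).2) htab hx

lemma exists_periodicPrimitive_affine (hstep : IsStepOn h B s) (hs : Icc a b ⊆ s)
    (hint : ∀ a b, IntervalIntegrable h volume a b) (hab : a < b)
    (hdisj : Disjoint (Ioo a b) B) :
    ∃ m : ℝ, ∀ t ∈ Icc a b,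
      periodicPrimitive h t = periodicPrimitive h a + (h m - circleMean h) * (t - a) := by
  obtain ⟨m, hm⟩ := nonempty_Ioo.mpr hab
  refine ⟨m, fun t ht ↦ ?_⟩
  have hconst : ∫ s in a..t, (h s - circleMean h) = ∫ _ in a..t, (h m - circleMean h) :=
    intervalIntegral.integral_congr_Ioo_of_le ht.1 fun s hs' ↦ by
      rw [hstep.eq_of_mem_Ioo (Ioo_subset_Icc_self.trans hs) hdisj
        ⟨hs'.1, hs'.2.trans_le ht.2⟩ hm]
  rw [← sub_eq_iff_eq_add', periodicPrimitive_sub_periodicPrimitive hint, hconst,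
    intervalIntegral.integral_const, smul_eq_mul, mul_comm]

end IsStepOn

lemma sum_norm_integral_exp_affine_le {φ : ℝ → ℝ} {a b c σ lam : ℝ} (hab : a ≤ b)
    (hlen : b - a ≤ 2 * π) (hφ : ∀ t ∈ Icc a b, φ t = c + σ * (t - a)) {M : ℕ}
    (hM : |lam * σ| + 1 ≤ M) :
    ∑ k ∈ Finset.Icc (-M : ℤ) M,
        ‖∫ t in a..b, Complex.exp (Complex.I * lam * φ t) * Complex.exp (-Complex.I * k * t)‖ ≤
      7 * (4 + 2 * Real.log (2 * M)) := by
  have hround : (round (lam * σ)).natAbs ≤ M := by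
    have hsub := abs_sub_abs_le_abs_sub (round (lam * σ) : ℝ) (lam * σ)
    rw [abs_sub_comm] at hsub
    rw [← Nat.cast_le (α := ℝ), Nat.cast_natAbs, Int.cast_abs]
    linarith [abs_sub_round (lam * σ)]
  have hterm (k : ℤ) :
      ‖∫ t in a..b, Complex.exp (Complex.I * lam * φ t) * Complex.exp (-Complex.I * k * t)‖ ≤
        7 * (max 1 (k - round (lam * σ)).natAbs : ℝ)⁻¹ := by
    have hfactor (t : ℝ) (ht : t ∈ uIcc a b) :
        Complex.exp (Complex.I * lam * φ t) * Complex.exp (-Complex.I * k * t) =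
          Complex.exp (Complex.I * (lam * (c - σ * a) : ℝ)) *
            Complex.exp (Complex.I * (lam * σ - k : ℝ) * t) := by
      rw [hφ t (uIcc_of_le hab ▸ ht), ← Complex.exp_add, ← Complex.exp_add]
      congr 1
      push_cast
      ring
    rw [intervalIntegral.integral_congr hfactor, intervalIntegral.integral_const_mul, norm_mul,
      Complex.norm_exp_I_mul_ofReal, one_mul]
    exact norm_integral_exp_I_mul_sub_le _ k hab hlen
  calc _ ≤ ∑ k ∈ Finset.Icc (-M : ℤ) M, 7 * (max 1 (k - round (lam * σ)).natAbs : ℝ)⁻¹ :=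
        Finset.sum_le_sum fun k _ ↦ hterm k
    _ ≤ 7 * (4 + 2 * Real.log (2 * M)) := by
        rw [← Finset.mul_sum]
        gcongr
        exact sum_inv_max_one_le hround

section StepSlope

variable {h : ℝ → ℝ} {B : Finset ℝ} {lam : ℝ}

lemma sum_norm_fourierCoef_exp_le (hmeas : Measurable h) (hh : ∀ t, h t ∈ Icc 0 1)
    (hstep : IsStepOn h B (Icc 0 (2 * π))) {M : ℕ} (hM : |lam| + 1 ≤ M) :
    ∑ k ∈ Finset.Icc (-M : ℤ) M,
        ‖fourierCoef (fun t ↦ Complex.exp (Complex.I * lam * periodicPrimitive h t)) k‖ ≤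
      (2 * π)⁻¹ * ((B.card + 1) * (7 * (4 + 2 * Real.log (2 * M)))) := by
  have hint := intervalIntegrable_of_mem_Icc hmeas hh
  have hφ : Continuous (periodicPrimitive h) := continuous_periodicPrimitive hint
  have hM1 : (1 : ℝ) ≤ M := by linarith [abs_nonneg lam]
  have hlog : 0 ≤ Real.log (2 * M) := Real.log_nonneg (by linarith)
  simp_rw [norm_fourierCoef, ← Finset.mul_sum]
  refine mul_le_mul_of_nonneg_left ?_ (by positivity)
  refine le_card_add_one_mul (Q := fun x y ↦ ∑ k ∈ Finset.Icc (-M : ℤ) M,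
    ‖∫ t in x..y, Complex.exp (Complex.I * lam * periodicPrimitive h t) *
      Complex.exp (-Complex.I * k * t)‖) (by positivity) (fun x y z ↦ ?_) B two_pi_pos.le
    fun x y hx hxy hy hdisj ↦ ?_
  · rw [← Finset.sum_add_distrib]
    refine Finset.sum_le_sum fun k _ ↦ ?_
    rw [← intervalIntegral.integral_add_adjacent_intervals (b := y)
      (Continuous.intervalIntegrable (by fun_prop) _ _)
      (Continuous.intervalIntegrable (by fun_prop) _ _)]
    exact norm_add_le _ _
  · rcases hxy.eq_or_lt with rfl | hlt
    · simp only [intervalIntegral.integral_same, norm_zero, Finset.sum_const_zero]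
      positivity
    · obtain ⟨m, hm⟩ := hstep.exists_periodicPrimitive_affine (Icc_subset_Icc hx hy) hint hlt hdisj
      refine sum_norm_integral_exp_affine_le hxy (by linarith) hm (le_trans ?_ hM)
      rw [abs_mul]
      gcongr
      refine mul_le_of_le_one_right (abs_nonneg _) ?_
      simpa only [sub_zero] using abs_sub_circleMean_le (hint _ _) hh m

lemma ApNorm_exp_periodicPrimitive_le_sum (hmeas : Measurable h) (hh : ∀ t, h t ∈ Icc 0 1)
    (hstep : IsStepOn h B (Icc 0 (2 * π))) {M : ℕ} (hM : lam ^ 2 ≤ M) :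
    ApNorm 1 (fun t ↦ Complex.exp (Complex.I * lam * periodicPrimitive h t)) ≤
      ENNReal.ofReal (∑ k ∈ Finset.Icc (-M : ℤ) M,
        ‖fourierCoef (fun t ↦ Complex.exp (Complex.I * lam * periodicPrimitive h t)) k‖ + 2) := by
  have hint := intervalIntegrable_of_mem_Icc hmeas hh
  have hφ : Continuous (periodicPrimitive h) := continuous_periodicPrimitive hint
  set w : ℝ → ℂ := fun t ↦ Complex.exp (Complex.I * lam * periodicPrimitive h t) *
    (Complex.I * lam * ((h t - circleMean h : ℝ) : ℂ)) with hw
  have hderiv (t : ℝ) (ht : t ∈ Ioo 0 (2 * π) \ (B : Set ℝ)) :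
      HasDerivAt (fun t ↦ Complex.exp (Complex.I * lam * periodicPrimitive h t)) (w t) t :=
    ((hasDerivAt_periodicPrimitive hint hmeas <| hstep.continuousAt
      (Icc_mem_nhds ht.1.1 ht.1.2) ht.2).ofReal_comp.const_mul _).cexp
  have hwle (t : ℝ) : ‖w t‖ ≤ |lam| := by
    rw [hw, norm_mul, mul_assoc Complex.I, mul_assoc Complex.I, ← Complex.ofReal_mul,
      Complex.norm_exp_I_mul_ofReal, one_mul, norm_mul, norm_mul, Complex.norm_I, one_mul,
      Complex.norm_real, Complex.norm_real, norm_eq_abs, norm_eq_abs]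
    exact mul_le_of_le_one_right (abs_nonneg _)
      (by simpa only [sub_zero] using abs_sub_circleMean_le (hint _ _) hh t)
  have hL2 : MemLp w 2 (volume.restrict (Ioc 0 (2 * π))) :=
    MemLp.of_bound (by fun_prop) |lam| (ae_of_all _ hwle)
  have hmean : (2 * π)⁻¹ * ∫ t in (0 : ℝ)..(2 * π), ‖w t‖ ^ 2 ≤ M + 1 := by
    have hle := intervalIntegral.norm_integral_le_of_norm_le_const (a := 0) (b := 2 * π)
      (f := fun t ↦ ‖w t‖ ^ 2) (C := lam ^ 2) fun t _ ↦ by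
        rw [norm_pow, norm_norm, ← sq_abs lam]
        exact pow_le_pow_left₀ (norm_nonneg _) (hwle t) 2
    rw [sub_zero, abs_of_pos two_pi_pos] at hle
    rw [inv_mul_le_iff₀ two_pi_pos]
    nlinarith [le_norm_self (∫ t in (0 : ℝ)..(2 * π), ‖w t‖ ^ 2), two_pi_pos]
  refine (ApNorm_le_sum_Icc_add B.countable_toSet (by fun_prop) hderiv hL2
    (by rw [periodicPrimitive_zero, periodicPrimitive_two_pi (hint _ _)]) M).trans
    (ENNReal.ofReal_le_ofReal (add_le_add_right ?_ _))
  rw [div_mul_eq_mul_div, div_le_iff₀ (by positivity)]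
  gcongr

lemma ApNorm_exp_periodicPrimitive_le_of_isStepOn (hmeas : Measurable h)
    (hh : ∀ t, h t ∈ Icc 0 1) (hstep : IsStepOn h B (Icc 0 (2 * π))) (hlam : 2 ≤ |lam|) :
    ApNorm 1 (fun t ↦ Complex.exp (Complex.I * lam * periodicPrimitive h t)) ≤
      ENNReal.ofReal (20 * (B.card + 1) * Real.log |lam|) := by
  -- This cutoff makes the tail bounded while the harmonic sum up to `M` stays `O(log |lam|)`.
  set M := ⌈lam ^ 2⌉₊
  have hsq : 2 * |lam| ≤ lam ^ 2 := by nlinarith [sq_abs lam]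
  have hMlow : lam ^ 2 ≤ M := Nat.le_ceil _
  have hMupp : (M : ℝ) < lam ^ 2 + 1 := Nat.ceil_lt_add_one (sq_nonneg lam)
  have hlog2 : 0.69 < Real.log |lam| :=
    lt_of_lt_of_le (by linarith [log_two_gt_d9]) (Real.log_le_log two_pos hlam)
  have hlogM : Real.log (2 * M) ≤ 4 * Real.log |lam| := by
    rw [show 4 * Real.log |lam| = Real.log (|lam| ^ 4) by rw [Real.log_pow]; norm_num]
    refine Real.log_le_log (by linarith) ?_
    nlinarith [sq_abs lam, sq_nonneg (lam ^ 2), abs_nonneg lam]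
  refine (ApNorm_exp_periodicPrimitive_le_sum hmeas hh hstep hMlow).trans
    (ENNReal.ofReal_le_ofReal ?_)
  have hlow := sum_norm_fourierCoef_exp_le (lam := lam) (M := M) hmeas hh hstep (by linarith)
  have hmain : (2 * π)⁻¹ * ((B.card + 1) * (7 * (4 + 2 * Real.log (2 * M)))) ≤
      16 * (B.card + 1) * Real.log |lam| := by
    rw [inv_mul_le_iff₀ two_pi_pos]
    calc (B.card + 1) * (7 * (4 + 2 * Real.log (2 * M)))
        ≤ (B.card + 1) * (7 * (4 + 2 * (4 * Real.log |lam|))) := by gcongr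
      _ ≤ (B.card + 1) * (6.28 * 16 * Real.log |lam|) :=
          mul_le_mul_of_nonneg_left (by linarith) (by positivity)
      _ ≤ (B.card + 1) * (2 * π * 16 * Real.log |lam|) := by gcongr; linarith [pi_gt_d2]
      _ = 2 * π * (16 * (B.card + 1) * Real.log |lam|) := by ring
  have htail : 2 ≤ 4 * (B.card + 1) * Real.log |lam| := by
    nlinarith [(B.card.cast_nonneg : (0 : ℝ) ≤ B.card)]
  linarith

end StepSlope

/-! ### A strictly increasing function close to step functions -/

/-- The triangle wave: the even `2π`-periodic function equal to `t` on `[0, π]`, which folds the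
circle onto `[0, π]`. -/
noncomputable def triangleWave (t : ℝ) : ℝ := arccos (cos t)

section TriangleWave

lemma continuous_triangleWave : Continuous triangleWave := continuous_arccos.comp continuous_cos

lemma periodic_triangleWave : Function.Periodic triangleWave (2 * π) := fun t ↦ by
  rw [triangleWave, cos_add_two_pi, triangleWave]

lemma triangleWave_of_le_pi {t : ℝ} (h0 : 0 ≤ t) (hπ : t ≤ π) : triangleWave t = t :=
  arccos_cos h0 hπ

lemma triangleWave_of_pi_le {t : ℝ} (hπ : π ≤ t) (h2π : t ≤ 2 * π) :
    triangleWave t = 2 * π - t := by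
  rw [triangleWave, ← cos_two_pi_sub]
  exact arccos_cos (by linarith) (by linarith)

lemma not_eqOn_triangleWave_const {u v : ℝ} (huv : u < v) (c : ℝ) :
    ¬ EqOn triangleWave (fun _ ↦ c) (Ioo u v) := by
  intro hconst
  have hcos : EqOn cos (fun _ ↦ cos c) (Ioo u v) := fun t ht ↦ by
    simp only [← hconst ht, triangleWave, cos_arccos (neg_one_le_cos t) (cos_le_one t)]
  have hsin : EqOn sin (fun _ ↦ 0) (Ioo u v) := fun t ht ↦ by
    have := (hcos.eventuallyEq_of_mem (isOpen_Ioo.mem_nhds ht)).deriv_eq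
    simpa using this
  obtain ⟨t, ht⟩ := nonempty_Ioo.mpr huv
  have := (hsin.eventuallyEq_of_mem (isOpen_Ioo.mem_nhds ht)).deriv_eq
  rw [Real.deriv_sin, deriv_const] at this
  have := sin_sq_add_cos_sq t
  simp_all [hsin ht]

lemma integral_comp_triangleWave {f : ℝ → ℝ} (hf : IntervalIntegrable f volume 0 π) :
    ∫ t in (0 : ℝ)..(2 * π), f (triangleWave t) = 2 * ∫ t in (0 : ℝ)..π, f t := by
  have hleft : EqOn (fun t ↦ f (triangleWave t)) f (uIcc 0 π) := fun t ht ↦ by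
    rw [uIcc_of_le pi_pos.le] at ht
    simp only [triangleWave_of_le_pi ht.1 ht.2]
  have hright : EqOn (fun t ↦ f (triangleWave t)) (fun t ↦ f (2 * π - t)) (uIcc π (2 * π)) :=
    fun t ht ↦ by
      rw [uIcc_of_le (by linarith [pi_pos])] at ht
      simp only [triangleWave_of_pi_le ht.1 ht.2]
  have hf' : IntervalIntegrable (fun t ↦ f (2 * π - t)) volume π (2 * π) := by
    have := (hf.comp_sub_left (2 * π)).symm
    rwa [sub_zero, two_mul, add_sub_cancel_right, ← two_mul] at this
  rw [← intervalIntegral.integral_add_adjacent_intervals (b := π)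
    (hf.congr (hleft.symm.mono uIoc_subset_uIcc))
    (hf'.congr (hright.symm.mono uIoc_subset_uIcc)),
    intervalIntegral.integral_congr hleft, intervalIntegral.integral_congr hright,
    intervalIntegral.integral_comp_sub_left, sub_self, two_mul, add_sub_cancel_right, two_mul]

lemma IsStepOn.exists_comp_triangleWave {g : ℝ → ℝ} {B : Finset ℝ} (hstep : IsStepOn g B univ) :
    ∃ B' : Finset ℝ, B'.card ≤ 2 * B.card + 1 ∧
      IsStepOn (fun t ↦ g (triangleWave t)) B' (Icc 0 (2 * π)) := by
  refine ⟨insert π (B ∪ B.image (2 * π - ·)), ?_, fun x hx y hy hxy hdisj ↦ ?_⟩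
  · calc (insert π (B ∪ B.image (2 * π - ·)) : Finset ℝ).card
        ≤ (B ∪ B.image (2 * π - ·) : Finset ℝ).card + 1 := Finset.card_insert_le _ _
      _ ≤ B.card + (B.image (2 * π - ·)).card + 1 := by gcongr; exact Finset.card_union_le _ _
      _ ≤ 2 * B.card + 1 := by linarith [Finset.card_image_le (s := B) (f := (2 * π - ·))]
  rw [disjoint_right] at hdisj
  have hπ : π ∉ Icc x y := hdisj (by simp)
  rcases lt_or_ge y π with hyπ | hyπ
  · simp only [triangleWave_of_le_pi hx.1 (hxy.trans hyπ.le), triangleWave_of_le_pi hy.1 hyπ.le]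
    exact hstep x (mem_univ x) y (mem_univ y) hxy (disjoint_right.mpr fun c hc ↦
      hdisj (by simp [Finset.mem_coe.mp hc]))
  · have hxπ : π < x := not_le.mp fun hle ↦ hπ ⟨hle, hyπ⟩
    simp only [triangleWave_of_pi_le hxπ.le hx.2, triangleWave_of_pi_le hyπ hy.2]
    refine (hstep _ (mem_univ _) _ (mem_univ _) (by linarith) (disjoint_right.mpr fun c hc hcxy ↦
      hdisj (a := 2 * π - c) (by simp [Finset.mem_coe.mp hc]) ?_)).symm
    exact ⟨by linarith [hcxy.2], by linarith [hcxy.1]⟩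

end TriangleWave

/-- The distribution function of `S` on `[0, 1]`, i.e. the length of the sublevel set
`{s ∈ [0, 1] | S s ≤ x}`. For increasing `S` it is a generalised inverse of `S`. -/
noncomputable def sublevelLength (S : ℝ → ℝ) (x : ℝ) : ℝ :=
  volume.real {s ∈ Icc (0 : ℝ) 1 | S s ≤ x}

section SublevelLength

variable {S T : ℝ → ℝ}

lemma volume_sublevel_ne_top (S : ℝ → ℝ) (x : ℝ) :
    volume {s ∈ Icc (0 : ℝ) 1 | S s ≤ x} ≠ ∞ :=
  measure_ne_top_of_subset (sep_subset _ _) (by simp)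

lemma sublevelLength_le {x y : ℝ} (hsub : ∀ s, S s ≤ x → T s ≤ y) :
    sublevelLength S x ≤ sublevelLength T y :=
  measureReal_mono (fun s hs ↦ ⟨hs.1, hsub s hs.2⟩) (volume_sublevel_ne_top T y)

lemma monotone_sublevelLength (S : ℝ → ℝ) : Monotone (sublevelLength S) :=
  fun _ _ hxy ↦ sublevelLength_le fun _ hs ↦ hs.trans hxy

lemma sublevelLength_mem_Icc (S : ℝ → ℝ) (x : ℝ) : sublevelLength S x ∈ Icc 0 1 := by
  refine ⟨measureReal_nonneg, ?_⟩
  calc sublevelLength S x ≤ volume.real (Icc (0 : ℝ) 1) :=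
        measureReal_mono (sep_subset _ _) (by simp)
    _ = 1 := by simp

lemma mul_sublevelLength_mem_Icc {c : ℝ} (hc : 0 ≤ c) (S : ℝ → ℝ) (x : ℝ) :
    c * sublevelLength S x ∈ Icc 0 c :=
  ⟨mul_nonneg hc (sublevelLength_mem_Icc S x).1,
    mul_le_of_le_one_right hc (sublevelLength_mem_Icc S x).2⟩

lemma sublevelLength_apply_of_strictMono (hS : StrictMono S) {p : ℝ} (hp : p ∈ Icc 0 1) :
    sublevelLength S (S p) = p := by
  have hset : {s ∈ Icc (0 : ℝ) 1 | S s ≤ S p} = Icc 0 p := by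
    ext s
    simp only [mem_ofPred_eq, hS.le_iff_le, mem_Icc]
    exact ⟨fun h ↦ ⟨h.1.1, h.2⟩, fun h ↦ ⟨⟨h.1, h.2.trans hp.2⟩, h.2⟩⟩
  rw [sublevelLength, hset, volume_real_Icc_of_le hp.1, sub_zero]

lemma continuous_sublevelLength_of_strictMono (hS : StrictMono S) :
    Continuous (sublevelLength S) := by
  have hmono : Monotone fun x ↦ (⟨_, sublevelLength_mem_Icc S x⟩ : unitInterval) :=
    fun _ _ hxy ↦ monotone_sublevelLength S hxy
  exact (hmono.continuous_of_surjective fun p ↦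
    ⟨S p, Subtype.ext (sublevelLength_apply_of_strictMono hS p.2)⟩).subtype_val

lemma exists_sublevelLength_lt (hS : StrictMono S) :
    ∃ p, ∀ x y, x < p → p < y → sublevelLength S x < sublevelLength S y := by
  obtain ⟨p, hcont, hp⟩ : ∃ p, ContinuousAt S p ∧ p ∈ Ioo (0 : ℝ) 1 := by
    simpa only [mem_compl_iff, mem_ofPred_eq, not_not] using
      (hS.monotone.countable_not_continuousAt.dense_compl ℝ).exists_between one_pos
  refine ⟨S p, fun x y hx hy ↦ ?_⟩
  obtain ⟨q, hSq, hpq, hq1⟩ : ∃ q, S q < y ∧ p < q ∧ q < 1 :=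
    ((hcont.eventually_lt_const hy).filter_mono nhdsWithin_le_nhds |>.and
      (Ioo_mem_nhdsGT hp.2)).exists
  calc sublevelLength S x ≤ sublevelLength S (S p) := monotone_sublevelLength S hx.le
    _ = p := sublevelLength_apply_of_strictMono hS (Ioo_subset_Icc_self hp)
    _ < q := hpq
    _ = sublevelLength S (S q) :=
        (sublevelLength_apply_of_strictMono hS ⟨(hp.1.trans hpq).le, hq1.le⟩).symm
    _ ≤ sublevelLength S y := monotone_sublevelLength S hSq.le

lemma isStepOn_sublevelLength {V : Finset ℝ} (hV : ∀ s, S s ∈ V) :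
    IsStepOn (sublevelLength S) V univ := by
  intro x _ y _ hxy hdisj
  refine le_antisymm (monotone_sublevelLength S hxy) (sublevelLength_le fun s hs ↦ ?_)
  by_contra! hlt
  exact disjoint_left.mp hdisj ⟨hlt.le, hs⟩ (hV s)

lemma integral_abs_sublevelLength_sub_le {τ : ℝ} (hTS : ∀ s, T s ≤ S s)
    (hST : ∀ s, S s ≤ T s + τ) {a b : ℝ} (hab : a ≤ b) :
    ∫ x in a..b, |sublevelLength S x - sublevelLength T x| ≤ τ := by
  have hτ : 0 ≤ τ := by linarith [hTS 0, hST 0]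
  have hint (a b : ℝ) : IntervalIntegrable (sublevelLength T) volume a b :=
    (monotone_sublevelLength T).intervalIntegrable
  have hint' : IntervalIntegrable (fun x ↦ sublevelLength T (x - τ)) volume a b :=
    ((monotone_sublevelLength T).comp fun _ _ h ↦ sub_le_sub_right h τ).intervalIntegrable
  have hsqueeze (x : ℝ) : |sublevelLength S x - sublevelLength T x| ≤
      sublevelLength T x - sublevelLength T (x - τ) := by
    have hupp : sublevelLength S x ≤ sublevelLength T x :=
      sublevelLength_le fun s hs ↦ (hTS s).trans hs
    have hlow : sublevelLength T (x - τ) ≤ sublevelLength S x :=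
      sublevelLength_le fun s hs ↦ by linarith [hST s]
    rw [abs_of_nonpos (sub_nonpos.mpr hupp)]
    linarith
  calc ∫ x in a..b, |sublevelLength S x - sublevelLength T x|
      ≤ ∫ x in a..b, (sublevelLength T x - sublevelLength T (x - τ)) :=
        intervalIntegral.integral_mono_on hab
          ((monotone_sublevelLength S).intervalIntegrable.sub (hint a b)).abs
          ((hint a b).sub hint') fun x _ ↦ hsqueeze x
    _ = (∫ x in (b - τ)..b, sublevelLength T x) - ∫ x in (a - τ)..a, sublevelLength T x := by
        rw [intervalIntegral.integral_sub (hint a b) hint',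
          intervalIntegral.integral_comp_sub_right]
        rw [← intervalIntegral.integral_add_adjacent_intervals (hint a (b - τ)) (hint _ b),
          ← intervalIntegral.integral_add_adjacent_intervals (hint (a - τ) a) (hint _ _)]
        ring
    _ ≤ ∫ x in (b - τ)..b, sublevelLength T x :=
        sub_le_self _ <| intervalIntegral.integral_nonneg (by linarith)
          fun x _ ↦ (sublevelLength_mem_Icc T x).1
    _ ≤ ∫ _ in (b - τ)..b, (1 : ℝ) :=
        intervalIntegral.integral_mono_on (by linarith) (hint _ _) intervalIntegrable_const
          fun x _ ↦ (sublevelLength_mem_Icc T x).2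
    _ = τ := by simp

end SublevelLength

/-- The increasing function with a jump of height `e j` at each point `r j`. -/
noncomputable def jumpFunction (e r : ℕ → ℝ) (x : ℝ) : ℝ :=
  ∑' j, if r j < x then e j else 0

/-- The function whose jumps are the first `N` jumps of `jumpFunction e r`. -/
noncomputable def jumpFunctionTrunc (e r : ℕ → ℝ) (N : ℕ) (x : ℝ) : ℝ :=
  ∑ j ∈ Finset.range N, if r j < x then e j else 0

/-- A superposition of translates of the generalised inverse of `jumpFunction e r`. The inverse is
continuous but constant on every gap in the range of the jump function; the translates by `r m`
make the sum strictly increasing when `r` is dense. -/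
noncomputable def inverseJumpSum (e r : ℕ → ℝ) (x : ℝ) : ℝ :=
  ∑' m, e m * sublevelLength (jumpFunction e r) (x - r m)

/-- The step function approximating `inverseJumpSum e r` that is built from the first `N` jumps and
translates only. -/
noncomputable def inverseJumpSumTrunc (e r : ℕ → ℝ) (N : ℕ) (x : ℝ) : ℝ :=
  ∑ m ∈ Finset.range N, e m * sublevelLength (jumpFunctionTrunc e r N) (x - r m)

section JumpFunction

variable {e r : ℕ → ℝ}

lemma jumpFunctionTrunc_mem_image (e r : ℕ → ℝ) (N : ℕ) (x : ℝ) :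
    jumpFunctionTrunc e r N x ∈ (Finset.range N).powerset.image fun A ↦ ∑ j ∈ A, e j := by
  rw [jumpFunctionTrunc, ← Finset.sum_filter]
  exact Finset.mem_image_of_mem _ (Finset.mem_powerset.mpr (Finset.filter_subset _ _))

lemma exists_isStepOn_inverseJumpSumTrunc (e r : ℕ → ℝ) (N : ℕ) :
    ∃ B : Finset ℝ, B.card ≤ N * 2 ^ N ∧ IsStepOn (inverseJumpSumTrunc e r N) B univ := by
  set V := (Finset.range N).powerset.image fun A ↦ ∑ j ∈ A, e j
  have hV : V.card ≤ 2 ^ N :=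
    Finset.card_image_le.trans (by rw [Finset.card_powerset, Finset.card_range])
  refine ⟨(Finset.range N).biUnion fun m ↦ V.image (· + r m), ?_, fun x _ y _ hxy hdisj ↦ ?_⟩
  · calc _ ≤ (Finset.range N).card * 2 ^ N :=
          Finset.card_biUnion_le_card_mul _ _ _ fun m _ ↦ Finset.card_image_le.trans hV
      _ = N * 2 ^ N := by rw [Finset.card_range]
  · refine Finset.sum_congr rfl fun m hm ↦ congrArg (e m * ·) ?_
    refine isStepOn_sublevelLength (jumpFunctionTrunc_mem_image e r N) _ (mem_univ _) _
      (mem_univ _) (sub_le_sub_right hxy _) (disjoint_left.mpr fun v hv hvV ↦ ?_)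
    have hmem : v + r m ∈ Icc x y := ⟨by linarith [hv.1], by linarith [hv.2]⟩
    refine disjoint_left.mp hdisj hmem ?_
    exact Finset.mem_coe.mpr (Finset.mem_biUnion.mpr ⟨m, hm, Finset.mem_image_of_mem _ hvV⟩)

lemma monotone_inverseJumpSumTrunc (he : ∀ j, 0 < e j) (r : ℕ → ℝ) (N : ℕ) :
    Monotone (inverseJumpSumTrunc e r N) :=
  fun _ _ hxy ↦ Finset.sum_le_sum fun m _ ↦
    mul_le_mul_of_nonneg_left (monotone_sublevelLength _ (sub_le_sub_right hxy _)) (he m).le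

variable (he : ∀ j, 0 < e j) (hsum : Summable e)

include he hsum

lemma summable_jumpFunction (r : ℕ → ℝ) (x : ℝ) :
    Summable fun j ↦ if r j < x then e j else 0 :=
  hsum.of_nonneg_of_le (fun j ↦ by split_ifs <;> simp [(he j).le])
    fun j ↦ by split_ifs <;> simp [(he j).le]

lemma strictMono_jumpFunction (hr : DenseRange r) : StrictMono (jumpFunction e r) := by
  intro x y hxy
  obtain ⟨_, ⟨j, rfl⟩, hxj, hjy⟩ := hr.exists_between hxy
  refine Summable.tsum_lt_tsum (i := j) (fun i ↦ ?_) ?_ (summable_jumpFunction he hsum r x)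
    (summable_jumpFunction he hsum r y)
  · by_cases hx : r i < x
    · simp [hx, hx.trans hxy]
    · split_ifs <;> simp [(he i).le]
  · simp [hxj.not_gt, hjy, he j]

lemma jumpFunctionTrunc_le (r : ℕ → ℝ) (N : ℕ) (x : ℝ) :
    jumpFunctionTrunc e r N x ≤ jumpFunction e r x :=
  (summable_jumpFunction he hsum r x).sum_le_tsum _
    fun j _ ↦ by split_ifs <;> simp [(he j).le]

lemma jumpFunction_le_trunc_add (r : ℕ → ℝ) (N : ℕ) (x : ℝ) :
    jumpFunction e r x ≤ jumpFunctionTrunc e r N x + ∑' j, e (j + N) := by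
  have hs := summable_jumpFunction he hsum r x
  rw [jumpFunction, ← hs.sum_add_tsum_nat_add N, jumpFunctionTrunc]
  refine add_le_add_right (Summable.tsum_le_tsum (fun j ↦ ?_) ((summable_nat_add_iff N).mpr hs)
    ((summable_nat_add_iff N).mpr hsum)) _
  split_ifs <;> simp [(he _).le]

lemma summable_inverseJumpSum (r : ℕ → ℝ) (x : ℝ) :
    Summable fun m ↦ e m * sublevelLength (jumpFunction e r) (x - r m) :=
  hsum.of_nonneg_of_le (fun m ↦ (mul_sublevelLength_mem_Icc (he m).le _ _).1)
    fun m ↦ (mul_sublevelLength_mem_Icc (he m).le _ _).2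

lemma continuous_inverseJumpSum (hr : DenseRange r) : Continuous (inverseJumpSum e r) := by
  have hcont := continuous_sublevelLength_of_strictMono (strictMono_jumpFunction he hsum hr)
  refine continuous_tsum (fun m ↦ continuous_const.mul (hcont.comp (continuous_sub_right (r m))))
    hsum fun m x ↦ ?_
  have hmem := mul_sublevelLength_mem_Icc (he m).le (jumpFunction e r) (x - r m)
  rw [norm_of_nonneg hmem.1]
  exact hmem.2

lemma strictMono_inverseJumpSum (hr : DenseRange r) : StrictMono (inverseJumpSum e r) := by
  intro x y hxy
  obtain ⟨p, hp⟩ := exists_sublevelLength_lt (strictMono_jumpFunction he hsum hr)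
  obtain ⟨_, ⟨m, rfl⟩, hxm, hmy⟩ := hr.exists_between (sub_lt_sub_right hxy p)
  refine Summable.tsum_lt_tsum (i := m) (fun i ↦ ?_) ?_ (summable_inverseJumpSum he hsum r x)
    (summable_inverseJumpSum he hsum r y)
  · exact mul_le_mul_of_nonneg_left (monotone_sublevelLength _ (sub_le_sub_right hxy.le _))
      (he i).le
  · exact mul_lt_mul_of_pos_left (hp _ _ (by linarith) (by linarith)) (he m)

lemma inverseJumpSum_mem_Icc (r : ℕ → ℝ) (x : ℝ) :
    inverseJumpSum e r x ∈ Icc 0 (∑' j, e j) :=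
  ⟨tsum_nonneg fun m ↦ (mul_sublevelLength_mem_Icc (he m).le _ _).1,
    (summable_inverseJumpSum he hsum r x).tsum_le_tsum
      (fun m ↦ (mul_sublevelLength_mem_Icc (he m).le _ _).2) hsum⟩

lemma inverseJumpSumTrunc_mem_Icc (r : ℕ → ℝ) (N : ℕ) (x : ℝ) :
    inverseJumpSumTrunc e r N x ∈ Icc 0 (∑' j, e j) :=
  ⟨Finset.sum_nonneg fun m _ ↦ (mul_sublevelLength_mem_Icc (he m).le _ _).1,
    (Finset.sum_le_sum fun m _ ↦ (mul_sublevelLength_mem_Icc (he m).le _ _).2).trans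
      (hsum.sum_le_tsum _ fun m _ ↦ (he m).le)⟩

lemma abs_inverseJumpSum_sub_trunc_le (r : ℕ → ℝ) (N : ℕ) (x : ℝ) :
    |inverseJumpSum e r x - inverseJumpSumTrunc e r N x| ≤
      ∑ m ∈ Finset.range N, e m * |sublevelLength (jumpFunction e r) (x - r m) -
        sublevelLength (jumpFunctionTrunc e r N) (x - r m)| + ∑' j, e (j + N) := by
  have hs := summable_inverseJumpSum he hsum r x
  have htail : ∑' m, e (m + N) * sublevelLength (jumpFunction e r) (x - r (m + N)) ∈
      Icc 0 (∑' j, e (j + N)) :=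
    ⟨tsum_nonneg fun m ↦ (mul_sublevelLength_mem_Icc (he _).le _ _).1,
      ((summable_nat_add_iff N).mpr hs).tsum_le_tsum
        (fun m ↦ (mul_sublevelLength_mem_Icc (he _).le _ _).2) ((summable_nat_add_iff N).mpr hsum)⟩
  rw [inverseJumpSum, ← hs.sum_add_tsum_nat_add N, inverseJumpSumTrunc, add_sub_right_comm,
    ← Finset.sum_sub_distrib]
  refine (abs_add_le _ _).trans (add_le_add ?_ ?_)
  · refine (Finset.abs_sum_le_sum_abs _ _).trans_eq (Finset.sum_congr rfl fun m _ ↦ ?_)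
    rw [← mul_sub, abs_mul, abs_of_pos (he m)]
  · rw [abs_of_nonneg htail.1]
    exact htail.2

lemma integral_abs_inverseJumpSum_sub_trunc_le (hr : DenseRange r) (N : ℕ) {a b : ℝ}
    (hab : a ≤ b) :
    ∫ x in a..b, |inverseJumpSum e r x - inverseJumpSumTrunc e r N x| ≤
      (∑' j, e j + (b - a)) * ∑' j, e (j + N) := by
  set τ := ∑' j, e (j + N)
  set c := sublevelLength (jumpFunction e r)
  set cN := sublevelLength (jumpFunctionTrunc e r N)
  have hτ : 0 ≤ τ := tsum_nonneg fun j ↦ (he _).le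
  have hint (m : ℕ) : IntervalIntegrable (fun x ↦ e m * |c (x - r m) - cN (x - r m)|) volume a b :=
    (((((monotone_sublevelLength _).comp fun _ _ h ↦ sub_le_sub_right h
      (r m)).intervalIntegrable).sub (((monotone_sublevelLength _).comp fun _ _ h ↦
        sub_le_sub_right h (r m)).intervalIntegrable)).abs).const_mul _
  have hint_sum : IntervalIntegrable
      (fun x ↦ ∑ m ∈ Finset.range N, e m * |c (x - r m) - cN (x - r m)|) volume a b := by
    simpa only [Finset.sum_fn] using IntervalIntegrable.sum (Finset.range N) fun m _ ↦ hint m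
  calc ∫ x in a..b, |inverseJumpSum e r x - inverseJumpSumTrunc e r N x|
      ≤ ∫ x in a..b, (∑ m ∈ Finset.range N, e m * |c (x - r m) - cN (x - r m)| + τ) :=
        intervalIntegral.integral_mono_on hab
          (((continuous_inverseJumpSum he hsum hr).intervalIntegrable _ _).sub
            (monotone_inverseJumpSumTrunc he r N).intervalIntegrable).abs
          (hint_sum.add intervalIntegrable_const)
          fun x _ ↦ abs_inverseJumpSum_sub_trunc_le he hsum r N x
    _ = ∑ m ∈ Finset.range N, e m * (∫ x in (a - r m)..(b - r m), |c x - cN x|) +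
          (b - a) * τ := by
        rw [intervalIntegral.integral_add hint_sum intervalIntegrable_const,
          intervalIntegral.integral_finsetSum fun m _ ↦ hint m,
          intervalIntegral.integral_const, smul_eq_mul]
        simp only [intervalIntegral.integral_const_mul,
          intervalIntegral.integral_comp_sub_right fun x ↦ |c x - cN x|]
    _ ≤ ∑ m ∈ Finset.range N, e m * τ + (b - a) * τ := by
        gcongr with m
        · exact (he m).le
        · exact integral_abs_sublevelLength_sub_le (jumpFunctionTrunc_le he hsum r N)
            (jumpFunction_le_trunc_add he hsum r N) (sub_le_sub_right hab _)
    _ ≤ (∑' j, e j + (b - a)) * τ := by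
        rw [← Finset.sum_mul, add_mul]
        gcongr
        exact hsum.sum_le_tsum _ fun m _ ↦ (he m).le

end JumpFunction

lemma exists_strictMono_approx {ε : ℕ → ℝ} (hε : Antitone ε) (hpos : ∀ N, 0 < ε N)
    (hone : ∀ N, ε N ≤ 1) :
    ∃ G : ℝ → ℝ, Continuous G ∧ StrictMono G ∧ (∀ x, G x ∈ Icc 0 1) ∧
      ∀ N : ℕ, ∃ (g : ℝ → ℝ) (B : Finset ℝ), Measurable g ∧ (∀ x, g x ∈ Icc 0 1) ∧
        IsStepOn g B univ ∧ B.card ≤ N * 2 ^ N ∧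
        ∀ a b, a ≤ b → ∫ x in a..b, |G x - g x| ≤ (1 + (b - a)) * ε N := by
  -- As `ε` is antitone, the jumps from the `N`-th on add up to at most `ε N`.
  set e : ℕ → ℝ := fun j ↦ ε j * (1 / 2 / 2 ^ j)
  have he (j : ℕ) : 0 < e j := mul_pos (hpos j) (by positivity)
  have hgeom := hasSum_geometric_two' (1 : ℝ)
  have hsum : Summable e := hgeom.summable.of_nonneg_of_le (fun j ↦ (he j).le)
    fun j ↦ mul_le_of_le_one_left (by positivity) (hone j)
  have htail (N : ℕ) : ∑' j, e (j + N) ≤ ε N := by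
    calc ∑' j, e (j + N) ≤ ∑' j, ε N * (1 / 2 / 2 ^ j) := by
          refine ((summable_nat_add_iff N).mpr hsum).tsum_le_tsum (fun j ↦ ?_)
            (hgeom.summable.mul_left _)
          exact mul_le_mul (hε (Nat.le_add_left N j)) (by gcongr <;> simp) (by positivity)
            (hpos N).le
      _ = ε N := by rw [tsum_mul_left, hgeom.tsum_eq, mul_one]
  have htotal : ∑' j, e j ≤ 1 := (htail 0).trans (hone 0)
  have hr : DenseRange (TopologicalSpace.denseSeq ℝ) := TopologicalSpace.denseRange_denseSeq ℝ
  refine ⟨inverseJumpSum e _, continuous_inverseJumpSum he hsum hr,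
    strictMono_inverseJumpSum he hsum hr,
    fun x ↦ Icc_subset_Icc_right htotal (inverseJumpSum_mem_Icc he hsum _ x), fun N ↦ ?_⟩
  obtain ⟨B, hcard, hB⟩ := exists_isStepOn_inverseJumpSumTrunc e (TopologicalSpace.denseSeq ℝ) N
  refine ⟨_, B, (monotone_inverseJumpSumTrunc he _ N).measurable,
    fun x ↦ Icc_subset_Icc_right htotal (inverseJumpSumTrunc_mem_Icc he hsum _ N x), hB, hcard,
    fun a b hab ↦ (integral_abs_inverseJumpSum_sub_trunc_le he hsum hr N hab).trans ?_⟩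
  gcongr
  · exact tsum_nonneg fun j ↦ (he _).le
  · exact htail N

/-! ### Perturbation and choice of scales -/

lemma ApNorm_I_mul_periodicPrimitive_le {h : ℝ → ℝ} (hmeas : Measurable h)
    (hh : ∀ t, h t ∈ Icc (-1) 1) {D : Set ℝ} (hD : D.Countable)
    (hcont : ∀ t ∈ Ioo 0 (2 * π) \ D, ContinuousAt h t) (lam : ℝ) {δ : ℝ}
    (hδ : ∫ t in (0 : ℝ)..(2 * π), |h t| ≤ δ) :
    ApNorm 1 (fun t ↦ Complex.I * lam * periodicPrimitive h t) ≤
      ENNReal.ofReal (|lam| * (2 * δ + 2 * √δ)) := by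
  rw [ApNorm_const_mul, ← ofReal_norm, norm_mul, Complex.norm_I, one_mul, Complex.norm_real,
    norm_eq_abs, ENNReal.ofReal_mul (abs_nonneg lam)]
  gcongr
  refine (ApNorm_periodicPrimitive_le hmeas hh hD hcont).trans (ENNReal.ofReal_le_ofReal ?_)
  gcongr

lemma ApNorm_exp_periodicPrimitive_le_of_approx {h g : ℝ → ℝ} (hh : Continuous h)
    (hper : Function.Periodic h (2 * π)) (hh_mem : ∀ t, h t ∈ Icc 0 1) (hg : Measurable g)
    (hg_mem : ∀ t, g t ∈ Icc 0 1) (hg_per : Function.Periodic g (2 * π)) {B : Finset ℝ}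
    (hstep : IsStepOn g B (Icc 0 (2 * π))) {lam δ : ℝ} (hlam : 2 ≤ |lam|)
    (hδ : ∫ t in (0 : ℝ)..(2 * π), |h t - g t| ≤ δ) :
    ApNorm 1 (fun t ↦ Complex.exp (Complex.I * lam * periodicPrimitive h t)) ≤
      ENNReal.ofReal (20 * (B.card + 1) * Real.log |lam| *
        Real.exp (|lam| * (2 * δ + 2 * √δ))) := by
  have hh_int (a b : ℝ) : IntervalIntegrable h volume a b := hh.intervalIntegrable a b
  have hg_int := intervalIntegrable_of_mem_Icc hg hg_mem
  have hdiff_int (a b : ℝ) : IntervalIntegrable (fun t ↦ h t - g t) volume a b :=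
    (hh_int a b).sub (hg_int a b)
  have hδ_nonneg : 0 ≤ δ :=
    (intervalIntegral.integral_nonneg two_pi_pos.le fun t _ ↦ abs_nonneg _).trans hδ
  have hlog : 0 ≤ Real.log |lam| := Real.log_nonneg (by linarith)
  set d : ℝ → ℝ := periodicPrimitive fun t ↦ h t - g t
  have hmem (t : ℝ) : h t - g t ∈ Icc (-1) 1 :=
    ⟨by linarith [(hh_mem t).1, (hg_mem t).2], by linarith [(hh_mem t).2, (hg_mem t).1]⟩
  have hd : ApNorm 1 (fun t ↦ Complex.I * lam * d t) ≤
      ENNReal.ofReal (|lam| * (2 * δ + 2 * √δ)) :=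
    ApNorm_I_mul_periodicPrimitive_le (hh.measurable.sub hg) hmem B.countable_toSet
      (fun t ht ↦ hh.continuousAt.sub (hstep.continuousAt (Icc_mem_nhds ht.1.1 ht.1.2) ht.2))
      lam hδ
  have hfactor : (fun t ↦ Complex.exp (Complex.I * lam * periodicPrimitive h t)) = fun t ↦
      Complex.exp (Complex.I * lam * periodicPrimitive g t) *
        Complex.exp (Complex.I * lam * d t) := by
    funext t
    rw [← Complex.exp_add, ← mul_add, ← Complex.ofReal_add]
    simp only [d, periodicPrimitive_sub hh_int hg_int, add_sub_cancel]
  rw [hfactor, ENNReal.ofReal_mul (by positivity)]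
  have hg_cont := continuous_periodicPrimitive hg_int
  have hd_cont : Continuous d := continuous_periodicPrimitive hdiff_int
  have hd_per : Function.Periodic (fun t ↦ Complex.I * lam * d t) (2 * π) := fun t ↦ by
    simp only [d, periodic_periodicPrimitive hdiff_int (hper.sub hg_per) t]
  refine (ApNorm_mul_exp_le (by fun_prop) (by fun_prop) hd_per
    (ne_top_of_le_ne_top ENNReal.ofReal_ne_top hd)).trans ?_
  gcongr
  · exact ApNorm_exp_periodicPrimitive_le_of_isStepOn hg hg_mem hstep hlam
  · exact ENNReal.toReal_le_of_le_ofReal (by positivity) hd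

lemma exists_antitone_scales {γ : ℝ → ℝ} (hγ : Filter.Tendsto γ Filter.atTop Filter.atTop)
    (K : ℕ → ℝ) :
    ∃ ε : ℕ → ℝ, Antitone ε ∧ (∀ N, 0 < ε N) ∧ (∀ N, ε N ≤ 1) ∧
      ∃ Λ : ℝ, 2 ≤ Λ ∧ ∀ x, Λ ≤ x → ∃ N, K N ≤ γ x ∧ x ^ 2 * ε N ≤ 1 := by
  obtain ⟨L, hL, hKL⟩ : ∃ L : ℕ → ℕ, StrictMono L ∧ ∀ N, ∀ x : ℝ, L N ≤ x → K N ≤ γ x :=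
    Filter.extraction_forall_of_eventually (P := fun N n ↦ ∀ x : ℝ, n ≤ x → K N ≤ γ x) fun N ↦ by
      obtain ⟨X, hX⟩ := Filter.eventually_atTop.mp (hγ.eventually_ge_atTop (K N))
      filter_upwards [Filter.eventually_ge_atTop ⌈X⌉₊] with n hn x hx
      exact hX x ((Nat.ceil_le.mp hn).trans hx)
  have hL_one (N : ℕ) : (1 : ℝ) ≤ L (N + 1) := by
    exact_mod_cast (Nat.le_add_left 1 N).trans (hL.le_apply)
  refine ⟨fun N ↦ ((L (N + 1) : ℝ) ^ 2)⁻¹, fun M N hMN ↦ ?_, fun N ↦ ?_, fun N ↦ ?_,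
    max 2 (L 0), le_max_left _ _, fun x hx ↦ ?_⟩
  · have := hL_one M
    have : L (M + 1) ≤ L (N + 1) := hL.monotone (by lia)
    simp only
    gcongr
  · have := hL_one N
    positivity
  · exact inv_le_one_of_one_le₀ (one_le_pow₀ (hL_one N))
  · have hx0 : (L 0 : ℝ) ≤ x := (le_max_right _ _).trans hx
    have hex : ∃ N, x < L (N + 1) := by
      obtain ⟨n, hn⟩ := exists_nat_gt x
      exact ⟨n, hn.trans_le (by exact_mod_cast (Nat.le_succ n).trans hL.le_apply)⟩
    classical
    refine ⟨Nat.find hex, hKL _ x ?_, ?_⟩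
    · rcases h : Nat.find hex with _ | N
      · exact hx0
      · exact not_lt.mp (Nat.find_min hex (h ▸ N.lt_succ_self))
    · rw [← div_eq_mul_inv]
      exact div_le_one_of_le₀
        (pow_le_pow_left₀ ((Nat.cast_nonneg _).trans hx0) (Nat.find_spec hex).le 2) (sq_nonneg _)

lemma not_affine_periodicPrimitive_comp_triangleWave {G : ℝ → ℝ} (hG : Continuous G)
    (hinj : Function.Injective G) {u v : ℝ} (huv : u < v) :
    ¬ ∃ a b : ℝ, ∀ t ∈ Ioo u v,
      periodicPrimitive (fun s ↦ G (triangleWave s)) t = a * t + b := by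
  rintro ⟨a, b, hlin⟩
  have hconst := eqOn_const_of_periodicPrimitive_affine (hG.comp continuous_triangleWave) hlin
  obtain ⟨t₀, ht₀⟩ := nonempty_Ioo.mpr huv
  exact not_eqOn_triangleWave_const huv (triangleWave t₀) fun t ht ↦
    hinj ((hconst ht).trans (hconst ht₀).symm)

lemma mul_add_sqrt_le_of_sq_mul_le_one {x ε : ℝ} (hx : 2 ≤ x)
    (hscale : x ^ 2 * ε ≤ 1) : x * (2 * (9 * ε) + 2 * √(9 * ε)) ≤ 15 := by
  have hlin : x * ε ≤ 1 / 2 := by nlinarith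
  have hsqrt : x * √(9 * ε) ≤ 3 := by
    calc x * √(9 * ε) = √(9 * (x ^ 2 * ε)) := by
          rw [mul_left_comm, sqrt_mul (sq_nonneg x), sqrt_sq (by linarith)]
      _ ≤ 3 := sqrt_le_iff.mpr ⟨by norm_num, by linarith⟩
  linarith

lemma exists_ApNorm_exp_le {ε : ℕ → ℝ} (hε : Antitone ε) (hpos : ∀ N, 0 < ε N)
    (hone : ∀ N, ε N ≤ 1) :
    ∃ φ : ℝ → ℝ, Function.Periodic φ (2 * π) ∧ ContDiff ℝ 1 φ ∧
      (∀ u v : ℝ, u < v → ¬ ∃ a b : ℝ, ∀ t ∈ Ioo u v, φ t = a * t + b) ∧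
      ∀ (N : ℕ) (lam : ℝ), 2 ≤ |lam| → |lam| ^ 2 * ε N ≤ 1 →
        ApNorm 1 (fun t ↦ Complex.exp (Complex.I * lam * φ t)) ≤
          ENNReal.ofReal (40 * Real.exp 15 * (N * 2 ^ N + 1) * Real.log |lam|) := by
  obtain ⟨G, hG, hmono, hG_mem, happrox⟩ := exists_strictMono_approx hε hpos hone
  have hh : Continuous fun t ↦ G (triangleWave t) := hG.comp continuous_triangleWave
  have hper : Function.Periodic (fun t ↦ G (triangleWave t)) (2 * π) := periodic_triangleWave.comp G
  refine ⟨periodicPrimitive fun t ↦ G (triangleWave t),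
    periodic_periodicPrimitive (fun a b ↦ hh.intervalIntegrable a b) hper,
    contDiff_one_periodicPrimitive hh,
    fun u v huv ↦ not_affine_periodicPrimitive_comp_triangleWave hG hmono.injective huv,
    fun N lam hlam hscale ↦ ?_⟩
  obtain ⟨g, B, hg, hg_mem, hstep, hcard, hdist⟩ := happrox N
  obtain ⟨B', hcard', hstep'⟩ := hstep.exists_comp_triangleWave
  have hB' : (B'.card : ℝ) + 1 ≤ 2 * (N * 2 ^ N + 1) := by
    exact_mod_cast (show B'.card + 1 ≤ 2 * (N * 2 ^ N + 1) by lia)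
  have hδ : ∫ t in (0 : ℝ)..(2 * π), |G (triangleWave t) - g (triangleWave t)| ≤ 9 * ε N := by
    rw [integral_comp_triangleWave (f := fun x ↦ |G x - g x|) ((hG.intervalIntegrable _ _).sub
      (intervalIntegrable_of_mem_Icc hg hg_mem _ _)).abs]
    nlinarith [hdist 0 π pi_pos.le, pi_lt_d2, hpos N]
  have hexponent := mul_add_sqrt_le_of_sq_mul_le_one hlam hscale
  refine (ApNorm_exp_periodicPrimitive_le_of_approx hh hper (fun t ↦ hG_mem _)
    (hg.comp continuous_triangleWave.measurable) (fun t ↦ hg_mem _)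
    (periodic_triangleWave.comp g) hstep' hlam hδ).trans ?_
  have hlog : 0 ≤ Real.log |lam| := Real.log_nonneg (by linarith)
  refine ENNReal.ofReal_le_ofReal ?_
  calc 20 * (B'.card + 1) * Real.log |lam| * Real.exp (|lam| * (2 * (9 * ε N) + 2 * √(9 * ε N)))
      ≤ 20 * (2 * (N * 2 ^ N + 1)) * Real.log |lam| * Real.exp 15 := by gcongr
    _ = 40 * Real.exp 15 * (N * 2 ^ N + 1) * Real.log |lam| := by ring

/-- Corollary 3: for any γ ≥ 0 with γ(λ) → +∞, there exists a nowhere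
linear real φ ∈ C¹(𝕋) with ‖e^{iλφ}‖_A = O(γ(|λ|)·log |λ|). -/
theorem statement5
    (γ : ℝ → ℝ) (hγ_nonneg : ∀ x : ℝ, 0 ≤ γ x)
    (hγ_tendsto : Filter.Tendsto γ Filter.atTop Filter.atTop) :
    ∃ φ : ℝ → ℝ,
      (∀ t : ℝ, φ (t + 2 * Real.pi) = φ t) ∧
      ContDiff ℝ 1 φ ∧
      -- φ is nowhere linear
      (∀ u v : ℝ, u < v → ¬ ∃ a b : ℝ, ∀ t ∈ Ioo u v, φ t = a * t + b) ∧
      (∃ C : ℝ, 0 < C ∧ ∃ Λ : ℝ, 2 ≤ Λ ∧ ∀ lam : ℝ, Λ ≤ |lam| →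
        ApNorm 1 (fun t => Complex.exp (Complex.I * (lam : ℂ) * (φ t : ℂ))) ≤
          ENNReal.ofReal (C * γ |lam| * Real.log |lam|)) := by
  obtain ⟨ε, hε, hpos, hone, Λ, hΛ, hscale⟩ :=
    exists_antitone_scales hγ_tendsto fun N ↦ N * 2 ^ N + 1
  obtain ⟨φ, hper, hdiff, hlin, hbound⟩ := exists_ApNorm_exp_le hε hpos hone
  refine ⟨φ, hper, hdiff, hlin, 40 * Real.exp 15, by positivity, Λ, hΛ, fun lam hlam ↦ ?_⟩
  obtain ⟨N, hNγ, hNε⟩ := hscale |lam| hlam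
  have hlog : 0 ≤ Real.log |lam| := Real.log_nonneg (by linarith)
  refine (hbound N lam (hΛ.trans hlam) hNε).trans (ENNReal.ofReal_le_ofReal ?_)
  gcongr
end

section
/- Let φ be a real-valued, non-constant, 2π-periodic C¹ function with ω(φ′,δ) ≤ c·ω(δ) for all δ ≥ 0, where c > 0 is fixed. Let m = min_{[0,2π]} φ′ and M = max_{[0,2π]} φ′ (so m < M). For λ > 0 define δ_λ > 0 by χ(2δ_λ) = 1/(2cλ), where χ(δ) = δ·ω(δ). Then for all sufficiently large λ > 0 and every integer k with mλ < k < Mλ, there exists an interval I ⊆ [0,2π] with |I| = 2δ_λ such that |(Δ_I · e^{iλφ})^∧(k)| ≥ δ_λ/(4π), where Δ_I is the triangle function supported on I. -/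
open MeasureTheory Real Set
open scoped ENNReal

/-- The triangle function supported on the interval [a,b]: value 1 at the center,
decreasing linearly to 0 at the endpoints. -/
noncomputable def triangleFun (a b : ℝ) (t : ℝ) : ℝ :=
  max (1 - |t - (a + b) / 2| / ((b - a) / 2)) 0

/-!
Write `e^{iλφ(t)} e^{-ikt} = e^{iθ(t)}` with `θ(t) = λφ(t) - kt`. If `mλ ≤ k ≤ Mλ`, Darboux's
theorem gives a stationary point `t₀` of `θ`. On an interval of length `2δ` containing `t₀` the
modulus of continuity yields `|θ'| ≤ λ c ω(2δ)`, and `χ(2δ) = 1 / (2cλ)` says precisely that this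
bound is `1 / (4δ)`. Thus `θ` stays within `1/2 ≤ π/3` of `θ(t₀)`, there is no cancellation, and the
coefficient is at least `cos (π/3) · δ / (2π)`.
-/

theorem cos_mul_integral_le_norm_integral_mul_cexp {α : Type*} [MeasurableSpace α] {μ : Measure α}
    {w θ : α → ℝ} {C r : ℝ} (hw : Integrable w μ) (hw_nonneg : 0 ≤ᵐ[μ] w)
    (hθ : AEMeasurable θ μ) (hr : r ≤ π) (hθC : ∀ᵐ x ∂μ, |θ x - C| ≤ r) :
    cos r * ∫ x, w x ∂μ ≤ ‖∫ x, (w x : ℂ) * Complex.exp (θ x * Complex.I) ∂μ‖ := by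
  set g : α → ℂ := fun x => w x * Complex.exp ((θ x - C : ℝ) * Complex.I)
  have hg : Integrable g μ := by
    refine hw.ofReal.mul_of_top_left (memLp_top_of_bound ?_ 1 (.of_forall fun x => ?_))
    · exact (by fun_prop : AEMeasurable _ μ).aestronglyMeasurable
    · exact (Complex.norm_exp_ofReal_mul_I _).le
  have g_re (x : α) : (g x).re = w x * cos (θ x - C) := by
    rw [Complex.re_ofReal_mul, Complex.exp_ofReal_mul_I_re]
  have le_g_re : ∀ᵐ x ∂μ, cos r * w x ≤ (g x).re := by
    filter_upwards [hw_nonneg, hθC] with x hwx hx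
    rw [g_re, mul_comm, ← cos_abs (θ x - C)]
    exact mul_le_mul_of_nonneg_left (cos_le_cos_of_nonneg_of_le_pi (abs_nonneg _) hr hx) hwx
  have rotate (x : α) : (w x : ℂ) * Complex.exp (θ x * Complex.I)
      = Complex.exp (C * Complex.I) * g x := by
    rw [mul_left_comm, ← Complex.exp_add]
    push_cast
    ring_nf
  calc cos r * ∫ x, w x ∂μ = ∫ x, cos r * w x ∂μ := (integral_const_mul _ _).symm
    _ ≤ ∫ x, (g x).re ∂μ := integral_mono_ae (hw.const_mul _) hg.re le_g_re
    _ = (∫ x, g x ∂μ).re := integral_re hg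
    _ ≤ ‖∫ x, g x ∂μ‖ := Complex.re_le_norm _
    _ = ‖∫ x, (w x : ℂ) * Complex.exp (θ x * Complex.I) ∂μ‖ := by
      simp only [rotate]
      rw [integral_const_mul, norm_mul, Complex.norm_exp_ofReal_mul_I, one_mul]

theorem integral_abs (a b : ℝ) : ∫ t in a..b, |t| = (b * |b| - a * |a|) / 2 := by
  have from_zero (c : ℝ) : ∫ t in 0..c, |t| = c * |c| / 2 := by
    rcases le_total 0 c with hc | hc
    · calc ∫ t in 0..c, |t| = ∫ t in 0..c, t :=
            intervalIntegral.integral_congr fun t ht => abs_of_nonneg (uIcc_of_le hc ▸ ht).1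
        _ = c * |c| / 2 := by rw [integral_id, abs_of_nonneg hc]; ring
    · calc ∫ t in 0..c, |t| = ∫ t in 0..c, -t :=
            intervalIntegral.integral_congr fun t ht => abs_of_nonpos (uIcc_of_ge hc ▸ ht).2
        _ = c * |c| / 2 := by
            rw [intervalIntegral.integral_neg, integral_id, abs_of_nonpos hc]
            ring
  have h_int (c : ℝ) : IntervalIntegrable (fun t : ℝ => |t|) volume 0 c :=
    continuous_abs.intervalIntegrable _ _
  rw [← intervalIntegral.integral_interval_sub_left (h_int b) (h_int a), from_zero, from_zero]
  ring

theorem integral_abs_sub_midpoint {a b : ℝ} (hab : a ≤ b) :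
    ∫ t in a..b, |t - (a + b) / 2| = (b - a) ^ 2 / 4 := by
  rw [intervalIntegral.integral_comp_sub_right (fun t => |t|), integral_abs,
    abs_of_nonneg (by linarith), abs_of_nonpos (by linarith)]
  ring

theorem triangleFun_nonneg (a b t : ℝ) : 0 ≤ triangleFun a b t :=
  le_max_right _ _

theorem continuous_triangleFun (a b : ℝ) : Continuous (triangleFun a b) := by
  unfold triangleFun
  fun_prop

theorem triangleFun_of_mem_Icc {a b t : ℝ} (ht : t ∈ Icc a b) :
    triangleFun a b t = 1 - |t - (a + b) / 2| / ((b - a) / 2) := by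
  refine max_eq_left (sub_nonneg.2 (div_le_one_of_le₀ (abs_le.2 ?_) ?_)) <;>
    grind

theorem triangleFun_of_notMem_Icc {a b t : ℝ} (hab : a < b) (ht : t ∉ Icc a b) :
    triangleFun a b t = 0 := by
  refine max_eq_right (sub_nonpos.2 ((one_le_div (by linarith)).2 (le_abs.2 ?_)))
  grind

theorem integral_triangleFun {a b : ℝ} (hab : a < b) :
    ∫ t in a..b, triangleFun a b t = (b - a) / 2 := by
  have hba : 0 < b - a := sub_pos.2 hab
  have on_Icc : EqOn (triangleFun a b) (fun t => 1 - |t - (a + b) / 2| / ((b - a) / 2))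
      (uIcc a b) := fun t ht => triangleFun_of_mem_Icc (uIcc_of_le hab.le ▸ ht)
  have h_int : IntervalIntegrable (fun t => |t - (a + b) / 2| / ((b - a) / 2)) volume a b :=
    Continuous.intervalIntegrable (by fun_prop) _ _
  rw [intervalIntegral.integral_congr on_Icc, intervalIntegral.integral_sub (by simp) h_int,
    intervalIntegral.integral_div, integral_abs_sub_midpoint hab.le, integral_one]
  field_simp
  ring

theorem fourierCoef_triangleFun_mul_cexp {a b : ℝ} (ha : 0 ≤ a) (hab : a < b) (hb : b ≤ 2 * π)
    (ψ : ℝ → ℝ) (k : ℤ) :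
    fourierCoef (fun t => triangleFun a b t * Complex.exp (Complex.I * ψ t)) k =
      1 / (2 * (π : ℂ)) *
        ∫ t in Icc a b, triangleFun a b t * Complex.exp ((ψ t - k * t : ℝ) * Complex.I) := by
  have merge (t : ℝ) : (triangleFun a b t : ℂ) * Complex.exp (Complex.I * ψ t) *
        Complex.exp (-Complex.I * k * t)
      = triangleFun a b t * Complex.exp ((ψ t - k * t : ℝ) * Complex.I) := by
    rw [mul_assoc, ← Complex.exp_add]
    push_cast
    ring_nf
  rw [fourierCoef, intervalIntegral.integral_of_le two_pi_pos.le, ← integral_Icc_eq_integral_Ioc,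
    ← setIntegral_eq_of_subset_of_forall_sdiff_eq_zero measurableSet_Icc (Icc_subset_Icc ha hb)
      fun t ht => by simp [triangleFun_of_notMem_Icc hab ht.2]]
  simp only [merge]

theorem cos_mul_le_norm_fourierCoef_triangleFun {a b C r : ℝ} {ψ : ℝ → ℝ} {k : ℤ} (ha : 0 ≤ a)
    (hab : a < b) (hb : b ≤ 2 * π) (hψ : ContinuousOn ψ (Icc a b)) (hr : r ≤ π)
    (hψC : ∀ t ∈ Icc a b, |ψ t - k * t - C| ≤ r) :
    cos r * ((b - a) / (4 * π)) ≤
      ‖fourierCoef (fun t => triangleFun a b t * Complex.exp (Complex.I * ψ t)) k‖ := by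
  have phase_cont : ContinuousOn (fun t => ψ t - k * t) (Icc a b) := by fun_prop
  have le_integral := cos_mul_integral_le_norm_integral_mul_cexp (μ := volume.restrict (Icc a b))
    (continuous_triangleFun a b).continuousOn.integrableOn_Icc
    (.of_forall (triangleFun_nonneg a b)) (phase_cont.aemeasurable measurableSet_Icc) hr
    ((ae_restrict_iff' measurableSet_Icc).2 (.of_forall hψC))
  rw [integral_Icc_eq_integral_Ioc, ← intervalIntegral.integral_of_le hab.le,
    integral_triangleFun hab] at le_integral
  have norm_factor : ‖1 / (2 * (π : ℂ))‖ = 1 / (2 * π) := by simp [abs_of_pos pi_pos]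
  rw [fourierCoef_triangleFun_mul_cexp ha hab hb, norm_mul, norm_factor]
  calc cos r * ((b - a) / (4 * π)) = 1 / (2 * π) * (cos r * ((b - a) / 2)) := by ring
    _ ≤ _ := mul_le_mul_of_nonneg_left le_integral (by positivity)

theorem exists_mem_Icc_add_subset_Icc {x y t d : ℝ} (ht : t ∈ Icc x y) (hd : 0 ≤ d)
    (hdxy : d ≤ y - x) : ∃ a, t ∈ Icc a (a + d) ∧ Icc a (a + d) ⊆ Icc x y := by
  refine ⟨min t (y - d), ⟨min_le_left _ _, ?_⟩, Icc_subset_Icc ?_ ?_⟩ <;>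
    grind

theorem exists_le_norm_fourierCoef_of_stationary {ψ ψ' : ℝ → ℝ} {δ t₀ : ℝ} {k : ℤ} (hδ : 0 < δ)
    (hδπ : δ ≤ π) (ht₀ : t₀ ∈ Icc 0 (2 * π))
    (hψ : ∀ t ∈ Icc 0 (2 * π), HasDerivWithinAt ψ (ψ' t) (Icc 0 (2 * π)) t)
    (hψk : ∀ t ∈ Icc 0 (2 * π), |t - t₀| ≤ 2 * δ → |ψ' t - k| ≤ 1 / (4 * δ)) :
    ∃ a b : ℝ, 0 ≤ a ∧ a ≤ b ∧ b ≤ 2 * π ∧ b - a = 2 * δ ∧ δ / (4 * π) ≤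
      ‖fourierCoef (fun t => triangleFun a b t * Complex.exp (Complex.I * ψ t)) k‖ := by
  obtain ⟨a, ht₀a, ha⟩ := exists_mem_Icc_add_subset_Icc ht₀ (d := 2 * δ) (by linarith)
    (by linarith)
  obtain ⟨ha₀, haπ⟩ := (Icc_subset_Icc_iff (by linarith)).1 ha
  have dist_le {t : ℝ} (ht : t ∈ Icc a (a + 2 * δ)) : |t - t₀| ≤ 2 * δ :=
    abs_sub_le_iff.2 ⟨by linarith [ht.2, ht₀a.1], by linarith [ht.1, ht₀a.2]⟩
  have phase_deriv (t : ℝ) (ht : t ∈ Icc a (a + 2 * δ)) :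
      HasDerivWithinAt (fun t => ψ t - k * t) (ψ' t - k) (Icc a (a + 2 * δ)) t := by
    simpa using ((hψ t (ha ht)).mono ha).fun_sub ((hasDerivWithinAt_id t _).const_mul (k : ℝ))
  have phase_le (t : ℝ) (ht : t ∈ Icc a (a + 2 * δ)) :
      |ψ t - k * t - (ψ t₀ - k * t₀)| ≤ π / 3 :=
    calc |ψ t - k * t - (ψ t₀ - k * t₀)| ≤ 1 / (4 * δ) * |t - t₀| :=
          (convex_Icc _ _).norm_image_sub_le_of_norm_hasDerivWithin_le phase_deriv
            (fun s hs => hψk s (ha hs) (dist_le hs)) ht₀a ht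
      _ ≤ 1 / (4 * δ) * (2 * δ) := by gcongr; exact dist_le ht
      _ = 1 / 2 := by field_simp; norm_num
      _ ≤ π / 3 := by linarith [pi_gt_three]
  refine ⟨a, a + 2 * δ, ha₀, by linarith, haπ, by ring, ?_⟩
  calc δ / (4 * π) = cos (π / 3) * ((a + 2 * δ - a) / (4 * π)) := by rw [cos_pi_div_three]; ring
    _ ≤ _ := cos_mul_le_norm_fourierCoef_triangleFun ha₀ (by linarith) haπ
      (fun t ht => ((hψ t (ha ht)).mono ha).continuousWithinAt) (by linarith [pi_pos]) phase_le

theorem statement6_general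
    {ω : ℝ → ℝ} (hχ_mono : StrictMonoOn (fun δ => δ * ω δ) (Ici 0)) {c : ℝ} (hc : 0 < c)
    {φ φ' : ℝ → ℝ}
    (hφ : ∀ t ∈ Icc 0 (2 * π), HasDerivWithinAt φ (φ' t) (Icc 0 (2 * π)) t)
    (hφ_mod : ∀ δ : ℝ, 0 ≤ δ → ∀ s ∈ Icc 0 (2 * π), ∀ t ∈ Icc 0 (2 * π), |s - t| ≤ δ →
      |φ' s - φ' t| ≤ c * ω δ)
    {m M : ℝ} (hm : m ∈ φ' '' Icc 0 (2 * π)) (hM : M ∈ φ' '' Icc 0 (2 * π))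
    {δfun : ℝ → ℝ}
    (hδ : ∀ lam : ℝ, 0 < lam → 0 < δfun lam ∧
      (2 * δfun lam) * ω (2 * δfun lam) = 1 / (2 * c * lam)) :
    ∃ Λ : ℝ, 0 < Λ ∧ ∀ lam : ℝ, Λ ≤ lam → ∀ k : ℤ,
      m * lam ≤ k → k ≤ M * lam →
      ∃ a b : ℝ, 0 ≤ a ∧ a ≤ b ∧ b ≤ 2 * π ∧ b - a = 2 * δfun lam ∧
        δfun lam / (4 * π) ≤
          ‖fourierCoef (fun t => (triangleFun a b t : ℂ) *
            Complex.exp (Complex.I * (lam : ℂ) * (φ t : ℂ))) k‖ := by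
  have χ_two_pi_pos : 0 < 2 * π * ω (2 * π) := by
    simpa using hχ_mono self_mem_Ici two_pi_pos.le two_pi_pos
  refine ⟨1 / (2 * c * (2 * π * ω (2 * π))), by positivity, fun lam hlam k hmk hkM => ?_⟩
  have hlam₀ : 0 < lam := lt_of_lt_of_le (by positivity) hlam
  obtain ⟨hδ₀, hχδ⟩ := hδ lam hlam₀
  have δ_le_pi : δfun lam ≤ π := by
    have χ_le : 2 * δfun lam * ω (2 * δfun lam) ≤ 2 * π * ω (2 * π) := by
      rw [hχδ]
      rw [div_le_iff₀ (by positivity)] at hlam ⊢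
      linarith
    have := (hχ_mono.le_iff_le (by simp [hδ₀.le]) two_pi_pos.le).1 χ_le
    linarith
  obtain ⟨t₀, ht₀, hφt₀⟩ : (k : ℝ) / lam ∈ φ' '' Icc 0 (2 * π) :=
    (ordConnected_Icc.image_hasDerivWithinAt hφ).out hm hM
      ⟨(le_div_iff₀ hlam₀).2 hmk, (div_le_iff₀ hlam₀).2 hkM⟩
  have slope_le (t : ℝ) (ht : t ∈ Icc 0 (2 * π)) (htt₀ : |t - t₀| ≤ 2 * δfun lam) :
      |lam * φ' t - k| ≤ 1 / (4 * δfun lam) :=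
    calc |lam * φ' t - k| = |lam * (φ' t - φ' t₀)| := by
          rw [hφt₀, mul_sub, mul_div_cancel₀ _ hlam₀.ne']
      _ = lam * |φ' t - φ' t₀| := by rw [abs_mul, abs_of_pos hlam₀]
      _ ≤ lam * (c * ω (2 * δfun lam)) :=
          mul_le_mul_of_nonneg_left (hφ_mod _ (by positivity) t ht t₀ ht₀ htt₀) hlam₀.le
      _ = 1 / (4 * δfun lam) := by field_simp at hχδ ⊢; linarith
  simpa [mul_assoc] using exists_le_norm_fourierCoef_of_stationary hδ₀ δ_le_pi ht₀
    (fun t ht => (hφ t ht).const_mul lam) slope_le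

/-- Lemma 1: for large λ and each integer k with mλ < k < Mλ there is an
interval I ⊆ [0,2π] of length 2δ_λ with |(Δ_I e^{iλφ})^∧(k)| ≥ δ_λ/(4π). -/
theorem statement6
    -- ω is a modulus of continuity
    (ω : ℝ → ℝ)
    (hω_cont : ContinuousOn ω (Ici 0)) (hω_mono : MonotoneOn ω (Ici 0))
    (hω_zero : ω 0 = 0) (hω_pos : ∀ δ : ℝ, 0 < δ → 0 < ω δ)
    (hχ_mono : StrictMonoOn (fun δ => δ * ω δ) (Ici 0))
    (hχ_unbdd : ∀ y : ℝ, ∃ δ : ℝ, 0 ≤ δ ∧ y < δ * ω δ)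
    (c : ℝ) (hc : 0 < c)
    (φ : ℝ → ℝ)
    (hφ_per : ∀ t : ℝ, φ (t + 2 * Real.pi) = φ t)
    (hφ_C1 : ContDiff ℝ 1 φ)
    (hφ_mod : ∀ δ : ℝ, 0 ≤ δ → ∀ s t : ℝ, |s - t| ≤ δ → |deriv φ s - deriv φ t| ≤ c * ω δ)
    (hφ_nonconst : ∃ s t : ℝ, φ s ≠ φ t)
    (m M : ℝ)
    (hm : IsLeast (deriv φ '' Icc 0 (2 * Real.pi)) m)
    (hM : IsGreatest (deriv φ '' Icc 0 (2 * Real.pi)) M)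
    -- δ_λ > 0 is defined by χ(2δ_λ) = 1/(2cλ)
    (δfun : ℝ → ℝ)
    (hδ : ∀ lam : ℝ, 0 < lam → 0 < δfun lam ∧
      (2 * δfun lam) * ω (2 * δfun lam) = 1 / (2 * c * lam)) :
    ∃ Λ : ℝ, 0 < Λ ∧ ∀ lam : ℝ, Λ ≤ lam → ∀ k : ℤ,
      m * lam < (k : ℝ) → (k : ℝ) < M * lam →
      ∃ a b : ℝ, 0 ≤ a ∧ a ≤ b ∧ b ≤ 2 * Real.pi ∧ b - a = 2 * δfun lam ∧
        δfun lam / (4 * Real.pi) ≤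
          ‖fourierCoef (fun t => (triangleFun a b t : ℂ) *
            Complex.exp (Complex.I * (lam : ℂ) * (φ t : ℂ))) k‖ := by
  obtain ⟨Λ, hΛ, h⟩ := statement6_general hχ_mono hc
    (fun t _ => (hφ_C1.differentiable one_ne_zero t).hasDerivAt.hasDerivWithinAt)
    (fun δ hδ s _ t _ => hφ_mod δ hδ s t) hm.1 hM.1 hδ
  exact ⟨Λ, hΛ, fun lam hlam k hmk hkM => h lam hlam k hmk.le hkM.le⟩
end

section
/- There is an absolute constant c > 0 with the following property: for every real function g on [0,2π] that is linear (g(t) = at + b) on an interval Δ ⊆ [0,2π], and for every y ≥ 2, one has Σ_{|k| ≤ y} |(1_Δ · e^{ig})^∧(k)| ≤ c · log y, where the sum is over integers k with |k| ≤ y. The constant c is independent of Δ, g and y. -/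
open MeasureTheory Real Set
open scoped ENNReal

/-!
Up to a unimodular factor, the `k`-th coefficient is `(2π)⁻¹ ∫_Δ exp (i (a - k) t) dt`, where `a` is
the slope of `g`. This integral is at most `|Δ|` trivially and at most `2 / |a - k|` by integrating
the exponential, so the coefficient is `O (1 / (1 + |a - k|))`. Over `N` distinct integers `k` the
sum of these bounds is largest when the integers cluster around `a`, where on each side of `a` it is
at most the harmonic sum `1 + 1/2 + ⋯ + 1/N ≤ 1 + log N`.
-/

theorem sum_cast_sub_le_sum_range_card {f : ℝ → ℝ} (hf : AntitoneOn f (Ici 0)) {x : ℝ}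
    {S : Finset ℤ} (hS : ∀ k ∈ S, x ≤ k) : ∑ k ∈ S, f (k - x) ≤ ∑ i ∈ Finset.range S.card, f i := by
  induction S using Finset.induction_on_max with
  | empty => simp
  | insert m S hlt ih =>
    have hm : m ∉ S := fun h => (hlt m h).false
    rw [Finset.forall_mem_insert] at hS
    have hsub : S ⊆ Finset.Ico ⌈x⌉ m := fun k hk =>
      Finset.mem_Ico.mpr ⟨Int.ceil_le.mpr (hS.2 k hk), hlt k hk⟩
    have hcard : (S.card : ℤ) ≤ m - ⌈x⌉ := by
      rw [← Int.card_Ico_of_le _ _ (Int.ceil_le.mpr hS.1)]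
      exact_mod_cast Finset.card_le_card hsub
    have hdist : (S.card : ℝ) ≤ m - x := by
      have : (S.card : ℝ) ≤ m - ⌈x⌉ := by exact_mod_cast hcard
      linarith [Int.le_ceil x]
    rw [Finset.sum_insert hm, Finset.card_insert_of_notMem hm, Finset.sum_range_succ, add_comm]
    exact add_le_add (ih hS.2)
      (hf (mem_Ici.mpr S.card.cast_nonneg) (mem_Ici.mpr (sub_nonneg.mpr hS.1)) hdist)

theorem sum_sub_cast_le_sum_range_card {f : ℝ → ℝ} (hf : AntitoneOn f (Ici 0)) {x : ℝ}
    {S : Finset ℤ} (hS : ∀ k ∈ S, k ≤ x) : ∑ k ∈ S, f (x - k) ≤ ∑ i ∈ Finset.range S.card, f i := by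
  have hneg : ∀ k ∈ S.map (Equiv.neg ℤ).toEmbedding, -x ≤ (k : ℝ) :=
    Finset.forall_mem_map.mpr fun k hk => by simpa using hS k hk
  simpa [neg_add_eq_sub] using sum_cast_sub_le_sum_range_card hf hneg

theorem sum_abs_sub_cast_le_two_mul_sum_range_card {f : ℝ → ℝ} (hf : AntitoneOn f (Ici 0))
    (hf₀ : ∀ n : ℕ, 0 ≤ f n) (x : ℝ) (S : Finset ℤ) :
    ∑ k ∈ S, f |x - k| ≤ 2 * ∑ i ∈ Finset.range S.card, f i := by
  have hfilter (p : ℤ → Prop) [DecidablePred p] :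
      ∑ i ∈ Finset.range (S.filter p).card, f i ≤ ∑ i ∈ Finset.range S.card, f i :=
    Finset.sum_le_sum_of_subset_of_nonneg (Finset.range_mono (Finset.card_filter_le S p))
      fun i _ _ => hf₀ i
  have hleft : ∑ k ∈ S with k ≤ ⌊x⌋, f |x - k| ≤ ∑ i ∈ Finset.range S.card, f i := by
    have hle : ∀ k ∈ S.filter (· ≤ ⌊x⌋), k ≤ x := fun k hk =>
      Int.le_floor.mp (Finset.mem_filter.mp hk).2
    calc ∑ k ∈ S with k ≤ ⌊x⌋, f |x - k| = ∑ k ∈ S with k ≤ ⌊x⌋, f (x - k) :=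
          Finset.sum_congr rfl fun k hk => by rw [abs_of_nonneg (sub_nonneg.mpr (hle k hk))]
      _ ≤ _ := sum_sub_cast_le_sum_range_card hf hle
      _ ≤ _ := hfilter _
  have hright : ∑ k ∈ S with ¬k ≤ ⌊x⌋, f |x - k| ≤ ∑ i ∈ Finset.range S.card, f i := by
    have hle : ∀ k ∈ S.filter (¬· ≤ ⌊x⌋), x ≤ k := fun k hk =>
      (Int.floor_lt.mp (not_le.mp (Finset.mem_filter.mp hk).2)).le
    calc ∑ k ∈ S with ¬k ≤ ⌊x⌋, f |x - k| = ∑ k ∈ S with ¬k ≤ ⌊x⌋, f (k - x) :=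
          Finset.sum_congr rfl fun k hk => by
            rw [abs_sub_comm, abs_of_nonneg (sub_nonneg.mpr (hle k hk))]
      _ ≤ _ := sum_cast_sub_le_sum_range_card hf hle
      _ ≤ _ := hfilter _
  rw [← Finset.sum_filter_add_sum_filter_not S (· ≤ ⌊x⌋), two_mul]
  exact add_le_add hleft hright

theorem sum_inv_abs_sub_cast_add_one_le (x : ℝ) (S : Finset ℤ) :
    ∑ k ∈ S, (|x - k| + 1)⁻¹ ≤ 2 * (1 + Real.log S.card) := by
  have hanti : AntitoneOn (fun r : ℝ => (r + 1)⁻¹) (Ici 0) := fun r hr s _ hrs => by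
    have : 0 ≤ r := hr
    dsimp only
    gcongr
  calc ∑ k ∈ S, (|x - k| + 1)⁻¹ ≤ 2 * ∑ i ∈ Finset.range S.card, ((i : ℝ) + 1)⁻¹ :=
        sum_abs_sub_cast_le_two_mul_sum_range_card hanti (fun n => by positivity) x S
    _ = 2 * (harmonic S.card : ℝ) := by simp [harmonic]
    _ ≤ 2 * (1 + Real.log S.card) := by gcongr; exact harmonic_le_one_add_log _

theorem norm_exp_ofReal_mul_I_mul_ofReal (c t : ℝ) : ‖Complex.exp (c * Complex.I * t)‖ = 1 := by
  rw [mul_right_comm, ← Complex.ofReal_mul, Complex.norm_exp_ofReal_mul_I]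

theorem norm_integral_exp_ofReal_mul_I_le_abs_sub (c u v : ℝ) :
    ‖∫ t in u..v, Complex.exp (c * Complex.I * t)‖ ≤ |v - u| := by
  simpa using intervalIntegral.norm_integral_le_of_norm_le_const (a := u) (b := v)
    fun t _ => (norm_exp_ofReal_mul_I_mul_ofReal c t).le

theorem abs_mul_norm_integral_exp_ofReal_mul_I_le_two (c u v : ℝ) :
    |c| * ‖∫ t in u..v, Complex.exp (c * Complex.I * t)‖ ≤ 2 := by
  rcases eq_or_ne c 0 with rfl | hc
  · simp
  have hcI : (c * Complex.I : ℂ) ≠ 0 := by simp [hc]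
  have hnorm : ‖(c * Complex.I : ℂ)‖ = |c| := by simp
  calc |c| * ‖∫ t in u..v, Complex.exp (c * Complex.I * t)‖
      = ‖Complex.exp (c * Complex.I * v) - Complex.exp (c * Complex.I * u)‖ := by
        rw [integral_exp_mul_complex hcI, ← hnorm, ← norm_mul, mul_div_cancel₀ _ hcI]
    _ ≤ ‖Complex.exp (c * Complex.I * v)‖ + ‖Complex.exp (c * Complex.I * u)‖ := norm_sub_le _ _
    _ = 2 := by simp only [norm_exp_ofReal_mul_I_mul_ofReal]; norm_num

theorem norm_integral_exp_ofReal_mul_I_le (c u v : ℝ) :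
    ‖∫ t in u..v, Complex.exp (c * Complex.I * t)‖ ≤ (|v - u| + 2) * (|c| + 1)⁻¹ := by
  rw [← div_eq_mul_inv, le_div_iff₀ (by positivity)]
  linarith [norm_integral_exp_ofReal_mul_I_le_abs_sub c u v,
    abs_mul_norm_integral_exp_ofReal_mul_I_le_two c u v]

theorem fourierCoef_indicator_Icc {u v : ℝ} (huv : u ≤ v) (hsub : Icc u v ⊆ Icc 0 (2 * Real.pi))
    (f : ℝ → ℂ) (k : ℤ) :
    fourierCoef ((Icc u v).indicator f) k =
      (1 / (2 * (Real.pi : ℂ))) * ∫ t in u..v, f t * Complex.exp (-Complex.I * k * t) := by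
  unfold fourierCoef
  simp_rw [← indicator_mul_left (Icc u v) f fun t : ℝ => Complex.exp (-Complex.I * k * t)]
  rw [intervalIntegral.integral_of_le Real.two_pi_pos.le, intervalIntegral.integral_of_le huv,
    ← integral_Icc_eq_integral_Ioc, ← integral_Icc_eq_integral_Ioc,
    setIntegral_indicator measurableSet_Icc, inter_eq_right.mpr hsub]

section LinearPhase

variable {g : ℝ → ℝ} {a b u v : ℝ}

theorem norm_fourierCoef_indicator_exp_linear (huv : u ≤ v)
    (hsub : Icc u v ⊆ Icc 0 (2 * Real.pi)) (hg : ∀ t ∈ Icc u v, g t = a * t + b) (k : ℤ) :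
    ‖fourierCoef ((Icc u v).indicator fun s => Complex.exp (Complex.I * (g s : ℂ))) k‖ =
      (2 * Real.pi)⁻¹ * ‖∫ t in u..v, Complex.exp ((a - k : ℝ) * Complex.I * t)‖ := by
  have hphase : EqOn
      (fun t : ℝ => Complex.exp (Complex.I * (g t : ℂ)) * Complex.exp (-Complex.I * k * t))
      (fun t : ℝ => Complex.exp (b * Complex.I) * Complex.exp ((a - k : ℝ) * Complex.I * t))
      (uIcc u v) := fun t ht => by
    rw [uIcc_of_le huv] at ht
    simp only [hg t ht, ← Complex.exp_add]
    congr 1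
    push_cast
    ring
  rw [fourierCoef_indicator_Icc huv hsub, intervalIntegral.integral_congr hphase,
    intervalIntegral.integral_const_mul, norm_mul, norm_mul, Complex.norm_exp_ofReal_mul_I, one_mul]
  simp [abs_of_pos Real.pi_pos]

theorem norm_fourierCoef_indicator_exp_linear_le (huv : u ≤ v)
    (hsub : Icc u v ⊆ Icc 0 (2 * Real.pi)) (hg : ∀ t ∈ Icc u v, g t = a * t + b) (k : ℤ) :
    ‖fourierCoef ((Icc u v).indicator fun s => Complex.exp (Complex.I * (g s : ℂ))) k‖ ≤
      2 * (|a - k| + 1)⁻¹ := by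
  have hlen : |v - u| ≤ 2 * Real.pi := by
    rw [abs_of_nonneg (sub_nonneg.mpr huv)]
    linarith [(hsub (left_mem_Icc.mpr huv)).1, (hsub (right_mem_Icc.mpr huv)).2]
  calc ‖fourierCoef ((Icc u v).indicator fun s => Complex.exp (Complex.I * (g s : ℂ))) k‖
      = (2 * Real.pi)⁻¹ * ‖∫ t in u..v, Complex.exp ((a - k : ℝ) * Complex.I * t)‖ :=
        norm_fourierCoef_indicator_exp_linear huv hsub hg k
    _ ≤ (2 * Real.pi)⁻¹ * ((|v - u| + 2) * (|a - k| + 1)⁻¹) := by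
        gcongr
        exact norm_integral_exp_ofReal_mul_I_le _ _ _
    _ ≤ (2 * Real.pi)⁻¹ * ((2 * (2 * Real.pi)) * (|a - k| + 1)⁻¹) := by
        gcongr
        linarith [Real.pi_gt_three]
    _ = 2 * (|a - k| + 1)⁻¹ := by field_simp

theorem sum_norm_fourierCoef_indicator_exp_linear_le (huv : u ≤ v)
    (hsub : Icc u v ⊆ Icc 0 (2 * Real.pi)) (hg : ∀ t ∈ Icc u v, g t = a * t + b) (S : Finset ℤ) :
    ∑ k ∈ S, ‖fourierCoef ((Icc u v).indicator fun s => Complex.exp (Complex.I * (g s : ℂ))) k‖ ≤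
      4 * (1 + Real.log S.card) := by
  calc ∑ k ∈ S, ‖fourierCoef ((Icc u v).indicator fun s => Complex.exp (Complex.I * (g s : ℂ))) k‖
      ≤ ∑ k ∈ S, 2 * (|a - k| + 1)⁻¹ :=
        Finset.sum_le_sum fun k _ => norm_fourierCoef_indicator_exp_linear_le huv hsub hg k
    _ = 2 * ∑ k ∈ S, (|a - k| + 1)⁻¹ := (Finset.mul_sum ..).symm
    _ ≤ 2 * (2 * (1 + Real.log S.card)) := by
        gcongr
        exact sum_inv_abs_sub_cast_add_one_le a S
    _ = 4 * (1 + Real.log S.card) := by ring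

end LinearPhase

theorem one_add_log_card_Icc_neg_floor_le {y : ℝ} (hy : 2 ≤ y) :
    1 + Real.log (Finset.Icc (-⌊y⌋) ⌊y⌋).card ≤ 5 * Real.log y := by
  have hfloor : (2 : ℤ) ≤ ⌊y⌋ := Int.le_floor.mpr (by exact_mod_cast hy)
  have hcard : ((Finset.Icc (-⌊y⌋) ⌊y⌋).card : ℝ) = 2 * ⌊y⌋ + 1 := by
    have : ((Finset.Icc (-⌊y⌋) ⌊y⌋).card : ℤ) = 2 * ⌊y⌋ + 1 := by rw [Int.card_Icc]; omega
    exact_mod_cast this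
  have hcube : 2 * (⌊y⌋ : ℝ) + 1 ≤ y ^ 3 := by
    nlinarith [Int.floor_le y, mul_self_le_mul_self zero_le_two hy]
  have hlog_card : Real.log (Finset.Icc (-⌊y⌋) ⌊y⌋).card ≤ 3 * Real.log y := by
    have hpos : (0 : ℝ) < 2 * ⌊y⌋ + 1 := by exact_mod_cast (by omega : 0 < 2 * ⌊y⌋ + 1)
    calc Real.log (Finset.Icc (-⌊y⌋) ⌊y⌋).card ≤ Real.log (y ^ 3) := by
          rw [hcard]; exact Real.log_le_log hpos hcube
      _ = 3 * Real.log y := by exact_mod_cast Real.log_pow y 3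
  have hlog_two : Real.log 2 ≤ Real.log y := Real.log_le_log two_pos hy
  linarith [Real.log_two_gt_d9]

/-- Lemma 2: there is an absolute constant c such that for any g linear
on an interval Δ ⊆ [0,2π] and any y ≥ 2, Σ_{|k|≤y} |(1_Δ e^{ig})^∧(k)| ≤ c·log y. -/
theorem statement7 :
    ∃ c : ℝ, 0 < c ∧
      ∀ (g : ℝ → ℝ) (a b u v : ℝ), u ≤ v → Icc u v ⊆ Icc 0 (2 * Real.pi) →
        (∀ t ∈ Icc u v, g t = a * t + b) →
        ∀ y : ℝ, 2 ≤ y →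
          ∑ k ∈ Finset.Icc (-⌊y⌋) ⌊y⌋,
            ‖fourierCoef
              (Set.indicator (Icc u v) (fun s => Complex.exp (Complex.I * (g s : ℂ)))) k‖
            ≤ c * Real.log y := by
  refine ⟨20, by norm_num, fun g a b u v huv hsub hg y hy => ?_⟩
  calc _ ≤ 4 * (1 + Real.log (Finset.Icc (-⌊y⌋) ⌊y⌋).card) :=
        sum_norm_fourierCoef_indicator_exp_linear_le huv hsub hg _
    _ ≤ 4 * (5 * Real.log y) := by
        gcongr
        exact one_add_log_card_Icc_neg_floor_le hy
    _ = 20 * Real.log y := by ring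
end

section
/- Let f be a real function on [0,2π] and I ⊆ [0,2π] an interval such that f is C¹ on I, the derivative f′ is monotone on I, and |f′(t)| ≤ 1 for all t ∈ I. Let λ > 0. Then for every integer k with |k| ≥ 2λ one has |(1_I · e^{iλf})^∧(k)| ≤ 2/|k|. -/
open MeasureTheory Real Set
open scoped ENNReal

/-!
The coefficient is `(2π)⁻¹ ∫ exp(iφ)` over `I ∩ [0, 2π]`, with phase `φ(t) = λ f(t) - k t`, whose
derivative is monotone and satisfies `|φ'| ≥ |k| - |λ|`. Thus it suffices to prove van der Corput's
first derivative bound `‖∫ exp(iφ)‖ ≤ 2 / μ` when `φ'` is monotone and `|φ'| ≥ μ > 0`.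

As `φ'` need not be differentiable, one does not integrate by parts: write
`exp(iφ) = (1 / φ') • (φ' exp(iφ))` and slice the weight `1 / φ' ∈ [0, 1 / μ]` into the indicators
of its superlevel sets. These are intervals, over each of which `φ' exp(iφ)`, being the derivative
of `-i exp(iφ)`, has integral of norm at most `2`.
-/

section Quasiconvex

variable {V : Type*} [AddCommMonoid V] [Module ℝ V] {s : Set V} {f : V → ℝ}

lemma quasiconcaveOn_inv_of_pos (hf : QuasiconvexOn ℝ s f) (hpos : ∀ x ∈ s, 0 < f x) :
    QuasiconcaveOn ℝ s fun x ↦ (f x)⁻¹ := by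
  refine quasiconcaveOn_iff_min_le.2 ⟨hf.convex, fun x hx y hy p q hp hq hpq ↦ ?_⟩
  have hz := hpos _ (hf.convex hx hy hp hq hpq)
  rcases le_max_iff.1 ((quasiconvexOn_iff_le_max.1 hf).2 hx hy hp hq hpq) with h | h
  · exact min_le_of_left_le (inv_anti₀ hz h)
  · exact min_le_of_right_le (inv_anti₀ hz h)

lemma quasilinearOn_const_mul_sub (hf : QuasilinearOn ℝ s f) (c d : ℝ) :
    QuasilinearOn ℝ s fun x ↦ c * f x - d := by
  rcases le_total 0 c with hc | hc
  · exact hf.monotone_comp (g := fun y ↦ c * y - d) fun _ _ hxy ↦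
      sub_le_sub_right (mul_le_mul_of_nonneg_left hxy hc) d
  · exact hf.antitone_comp (g := fun y ↦ c * y - d) fun _ _ hxy ↦
      sub_le_sub_right (mul_le_mul_of_nonpos_left hxy hc) d

end Quasiconvex

section SecondMeanValue

variable {E : Type*} [NormedAddCommGroup E] [NormedSpace ℝ E] [CompleteSpace E]

/- Layer cake: `g x = ∫ s in 0..M, 1_{s < g x}`, then Fubini. -/
lemma norm_integral_smul_le_of_superlevel {α : Type*} [MeasurableSpace α] {ν : Measure α}
    [SFinite ν] {g : α → ℝ} {h : α → E} {M C : ℝ} (hM : 0 ≤ M) (hg : AEMeasurable g ν)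
    (hg_mem : ∀ᵐ x ∂ν, g x ∈ Icc 0 M) (hh : Integrable h ν)
    (hC : ∀ s ∈ Ioc 0 M, ‖∫ x in {x | s < g x}, h x ∂ν‖ ≤ C) :
    ‖∫ x, g x • h x ∂ν‖ ≤ C * M := by
  let F : α → ℝ → E := fun x s ↦ {x | s < g x}.indicator h x
  have hlayer : ∀ᵐ x ∂ν, g x • h x = ∫ s in Ioc 0 M, F x s := by
    filter_upwards [hg_mem] with x hx
    have hslice : Ioc 0 M ∩ Iio (g x) = Ioo 0 (g x) := by
      ext s
      exact ⟨fun hs ↦ ⟨hs.1.1, hs.2⟩, fun hs ↦ ⟨⟨hs.1, hs.2.le.trans hx.2⟩, hs.2⟩⟩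
    calc g x • h x = ∫ _ in Ioc 0 M ∩ Iio (g x), h x := by
          rw [hslice, setIntegral_const, volume_real_Ioo_of_le hx.1, sub_zero]
      _ = ∫ s in Ioc 0 M, F x s := (setIntegral_indicator measurableSet_Iio).symm
  have hint : Integrable (Function.uncurry F) (ν.prod (volume.restrict (Ioc 0 M))) :=
    (hh.comp_fst _).indicator₀ (nullMeasurableSet_lt measurable_snd.aemeasurable hg.comp_fst)
  have hF_le : ∀ s ∈ Ioc 0 M, ‖∫ x, F x s ∂ν‖ ≤ C := fun s hs ↦ by
    have hslice : ∫ x, F x s ∂ν = ∫ x in {x | s < g x}, h x ∂ν :=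
      integral_indicator₀ (nullMeasurableSet_lt aemeasurable_const hg)
    exact hslice ▸ hC s hs
  calc ‖∫ x, g x • h x ∂ν‖ = ‖∫ s in Ioc 0 M, ∫ x, F x s ∂ν‖ := by
        rw [integral_congr_ae hlayer, integral_integral_swap hint]
    _ ≤ C * volume.real (Ioc 0 M) :=
        norm_setIntegral_le_of_norm_le_const measure_Ioc_lt_top hF_le
    _ = C * M := by rw [volume_real_Ioc_of_le hM, sub_zero]

lemma aemeasurable_restrict_of_quasiconcaveOn {s : Set ℝ} {g : ℝ → ℝ} {ν : Measure ℝ}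
    (hg : QuasiconcaveOn ℝ s g) : AEMeasurable g (ν.restrict s) := by
  refine aemeasurable_restrict_of_measurable_subtype hg.convex.ordConnected.measurableSet
    (measurable_of_Ioi fun r ↦ ⟨_, (hg.convex_gt r).ordConnected.measurableSet, ?_⟩)
  ext x
  simp

lemma exists_Icc_ae_eq_of_convex {s : Set ℝ} {a b : ℝ} (hs : Convex ℝ s) (hne : s.Nonempty)
    (hsub : s ⊆ Icc a b) : ∃ c d, a ≤ c ∧ c ≤ d ∧ d ≤ b ∧ s =ᵐ[volume] Icc c d := by
  have hclosure_sub : closure s ⊆ Icc a b := closure_minimal hsub isClosed_Icc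
  have hclosure : closure s = Icc (sInf (closure s)) (sSup (closure s)) :=
    eq_Icc_of_connected_compact ⟨hne.closure, hs.closure.isPreconnected⟩
      (isCompact_Icc.of_isClosed_subset isClosed_closure hclosure_sub)
  have hle : sInf (closure s) ≤ sSup (closure s) := nonempty_Icc.1 (hclosure ▸ hne.closure)
  have hends := (Icc_subset_Icc_iff hle).1 (hclosure ▸ hclosure_sub)
  exact ⟨_, _, hends.1, hle, hends.2,
    hclosure ▸ (closure_ae_eq_of_null_frontier (hs.addHaar_frontier volume)).symm⟩

lemma norm_setIntegral_smul_le_of_quasiconcaveOn {g : ℝ → ℝ} {h : ℝ → E} {a b M C : ℝ}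
    (hab : a ≤ b) (hg : QuasiconcaveOn ℝ (Icc a b) g) (hg_mem : ∀ t ∈ Icc a b, g t ∈ Icc 0 M)
    (hh : IntegrableOn h (Icc a b))
    (hC : ∀ c d, a ≤ c → c ≤ d → d ≤ b → ‖∫ t in c..d, h t‖ ≤ C) :
    ‖∫ t in Icc a b, g t • h t‖ ≤ C * M := by
  have hM : 0 ≤ M := nonempty_Icc.1 ⟨_, hg_mem a (left_mem_Icc.2 hab)⟩
  have hC0 : 0 ≤ C := (norm_nonneg _).trans (hC a a le_rfl le_rfl hab)
  have hmeas := aemeasurable_restrict_of_quasiconcaveOn (ν := volume) hg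
  refine norm_integral_smul_le_of_superlevel hM hmeas
    (ae_restrict_of_forall_mem measurableSet_Icc hg_mem) hh fun s _ ↦ ?_
  rw [Measure.restrict_restrict₀ (nullMeasurableSet_lt aemeasurable_const hmeas), inter_comm]
  rcases (Icc a b ∩ {t | s < g t}).eq_empty_or_nonempty with hempty | hne
  · simpa [hempty] using hC0
  · obtain ⟨c, d, hac, hcd, hdb, hae⟩ :=
      exists_Icc_ae_eq_of_convex (s := Icc a b ∩ {t | s < g t}) (hg.convex_gt s) hne
        inter_subset_left
    rw [setIntegral_congr_set hae, integral_Icc_eq_integral_Ioc,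
      ← intervalIntegral.integral_of_le hcd]
    exact hC c d hac hcd hdb

end SecondMeanValue

section VanDerCorput

variable {φ φ' : ℝ → ℝ} {a b μ : ℝ}

lemma continuousOn_cexp_of_hasDerivWithinAt {s : Set ℝ}
    (hderiv : ∀ t ∈ s, HasDerivWithinAt φ (φ' t) s t) :
    ContinuousOn (fun t ↦ Complex.exp (φ t * Complex.I)) s := by
  have : ContinuousOn φ s := fun t ht ↦ (hderiv t ht).continuousWithinAt
  fun_prop

lemma norm_intervalIntegral_deriv_smul_cexp_le (hab : a ≤ b)
    (hderiv : ∀ t ∈ Icc a b, HasDerivWithinAt φ (φ' t) (Icc a b) t)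
    (hint : IntegrableOn φ' (Icc a b)) :
    ‖∫ t in a..b, φ' t • Complex.exp (φ t * Complex.I)‖ ≤ 2 := by
  have hcont := continuousOn_cexp_of_hasDerivWithinAt hderiv
  have hprim : ∀ t ∈ Ioo a b, HasDerivAt (fun t ↦ -Complex.I * Complex.exp (φ t * Complex.I))
      (φ' t • Complex.exp (φ t * Complex.I)) t := fun t ht ↦ by
    have hφ := (hderiv t (Ioo_subset_Icc_self ht)).hasDerivAt (Icc_mem_nhds ht.1 ht.2)
    refine ((hφ.ofReal_comp.mul_const Complex.I).cexp.const_mul (-Complex.I)).congr_deriv ?_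
    rw [Complex.real_smul]
    linear_combination (-(φ' t : ℂ) * Complex.exp (φ t * Complex.I)) * Complex.I_mul_I
  rw [intervalIntegral.integral_eq_sub_of_hasDerivAt_of_le hab (continuousOn_const.mul hcont) hprim
    ((intervalIntegrable_iff_integrableOn_Icc_of_le hab).2
      (hint.smul_continuousOn hcont isCompact_Icc))]
  calc _ ≤ ‖-Complex.I * Complex.exp (φ b * Complex.I)‖
          + ‖-Complex.I * Complex.exp (φ a * Complex.I)‖ := norm_sub_le _ _
    _ = 2 := by
      simp only [norm_mul, norm_neg, Complex.norm_I, Complex.norm_exp_ofReal_mul_I]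
      norm_num

lemma integrableOn_Icc_of_hasDerivWithinAt_nonneg
    (hderiv : ∀ t ∈ Icc a b, HasDerivWithinAt φ (φ' t) (Icc a b) t)
    (hnonneg : ∀ t ∈ Icc a b, 0 ≤ φ' t) : IntegrableOn φ' (Icc a b) :=
  (integrableOn_Icc_iff_integrableOn_Ioc ..).2 <| intervalIntegral.integrableOn_deriv_of_nonneg
    (fun t ht ↦ (hderiv t ht).continuousWithinAt)
    (fun t ht ↦ (hderiv t (Ioo_subset_Icc_self ht)).hasDerivAt (Icc_mem_nhds ht.1 ht.2))
    fun t ht ↦ hnonneg t (Ioo_subset_Icc_self ht)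

lemma norm_setIntegral_cexp_le_of_le_deriv (hμ : 0 < μ)
    (hderiv : ∀ t ∈ Icc a b, HasDerivWithinAt φ (φ' t) (Icc a b) t)
    (hconv : QuasiconvexOn ℝ (Icc a b) φ') (hle : ∀ t ∈ Icc a b, μ ≤ φ' t) :
    ‖∫ t in Icc a b, Complex.exp (φ t * Complex.I)‖ ≤ 2 / μ := by
  rcases lt_or_ge b a with hba | hab
  · simpa [Icc_eq_empty_of_lt hba] using (div_pos two_pos hμ).le
  have hpos : ∀ t ∈ Icc a b, 0 < φ' t := fun t ht ↦ hμ.trans_le (hle t ht)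
  have hint := integrableOn_Icc_of_hasDerivWithinAt_nonneg hderiv fun t ht ↦ (hpos t ht).le
  have hcont := continuousOn_cexp_of_hasDerivWithinAt hderiv
  calc ‖∫ t in Icc a b, Complex.exp (φ t * Complex.I)‖
      = ‖∫ t in Icc a b, (φ' t)⁻¹ • φ' t • Complex.exp (φ t * Complex.I)‖ := by
        rw [setIntegral_congr_fun measurableSet_Icc
          fun t ht ↦ (inv_smul_smul₀ (hpos t ht).ne' _).symm]
    _ ≤ 2 * μ⁻¹ := by
        refine norm_setIntegral_smul_le_of_quasiconcaveOn hab (quasiconcaveOn_inv_of_pos hconv hpos)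
          (fun t ht ↦ ⟨(inv_pos.2 (hpos t ht)).le, inv_anti₀ hμ (hle t ht)⟩)
          (hint.smul_continuousOn hcont isCompact_Icc) fun c d hac hcd hdb ↦ ?_
        have hsub : Icc c d ⊆ Icc a b := Icc_subset_Icc hac hdb
        exact norm_intervalIntegral_deriv_smul_cexp_le hcd
          (fun t ht ↦ (hderiv t (hsub ht)).mono hsub) (hint.mono_set hsub)
    _ = 2 / μ := (div_eq_mul_inv _ _).symm

/- On an interval, `QuasilinearOn` means monotone or antitone. -/
lemma norm_setIntegral_cexp_le_of_le_abs_deriv (hμ : 0 < μ)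
    (hderiv : ∀ t ∈ Icc a b, HasDerivWithinAt φ (φ' t) (Icc a b) t)
    (hlin : QuasilinearOn ℝ (Icc a b) φ') (hle : ∀ t ∈ Icc a b, μ ≤ |φ' t|) :
    ‖∫ t in Icc a b, Complex.exp (φ t * Complex.I)‖ ≤ 2 / μ := by
  have hne : ∀ t ∈ Icc a b, φ' t ≠ 0 := fun t ht ↦ abs_pos.1 (hμ.trans_le (hle t ht))
  rcases hasDerivWithinAt_forall_lt_or_forall_gt_of_forall_ne (convex_Icc a b) hderiv hne
    with hneg | hpos
  · have hconj : ∀ t, Complex.exp ((-φ t : ℝ) * Complex.I)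
        = starRingEnd ℂ (Complex.exp (φ t * Complex.I)) := fun t ↦ by
      simp [← Complex.exp_conj]
    have hbound := norm_setIntegral_cexp_le_of_le_deriv hμ (fun t ht ↦ (hderiv t ht).neg)
      (hlin.2.antitone_comp fun _ _ ↦ neg_le_neg)
      fun t ht ↦ (hle t ht).trans_eq (abs_of_neg (hneg t ht))
    simpa only [Pi.neg_apply, hconj, integral_conj, Complex.norm_conj] using hbound
  · exact norm_setIntegral_cexp_le_of_le_deriv hμ hderiv hlin.1
      fun t ht ↦ (hle t ht).trans_eq (abs_of_pos (hpos t ht))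

end VanDerCorput

lemma fourierCoef_indicator {s : Set ℝ} (hs : MeasurableSet s) (g : ℝ → ℂ) (k : ℤ) :
    fourierCoef (s.indicator g) k = 1 / (2 * (Real.pi : ℂ)) *
      ∫ t in s ∩ Icc 0 (2 * Real.pi), g t * Complex.exp (-Complex.I * k * t) := by
  have hmul : ∀ t : ℝ, s.indicator g t * Complex.exp (-Complex.I * k * t)
      = s.indicator (fun t ↦ g t * Complex.exp (-Complex.I * k * t)) t :=
    fun t ↦ (indicator_mul_left (i := t) s g fun t ↦ Complex.exp (-Complex.I * k * t)).symm
  rw [fourierCoef, intervalIntegral.integral_of_le two_pi_pos.le, ← integral_Icc_eq_integral_Ioc]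
  simp_rw [hmul]
  rw [setIntegral_indicator hs, inter_comm]

lemma one_div_pi_mul_sub_le {x y : ℝ} (hy : 0 < y) (hxy : 2 * x ≤ y) :
    1 / (Real.pi * (y - x)) ≤ 2 / y := by
  rw [div_le_div_iff₀ (mul_pos pi_pos (by linarith)) hy]
  nlinarith [pi_gt_three]

theorem statement9_general (f f' : ℝ → ℝ) (a b : ℝ)
    (hderiv : ∀ t ∈ Icc a b, HasDerivWithinAt f (f' t) (Icc a b) t)
    (hmono : MonotoneOn f' (Icc a b) ∨ AntitoneOn f' (Icc a b))
    (hbound : ∀ t ∈ Icc a b, |f' t| ≤ 1) (lam : ℝ) (k : ℤ) (hk : |lam| < |(k : ℝ)|) :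
    ‖fourierCoef ((Icc a b).indicator fun t ↦ Complex.exp (Complex.I * lam * f t)) k‖
      ≤ 1 / (Real.pi * (|(k : ℝ)| - |lam|)) := by
  have hphase : ∀ t : ℝ, Complex.exp (Complex.I * lam * f t) * Complex.exp (-Complex.I * k * t)
      = Complex.exp ((lam * f t - k * t : ℝ) * Complex.I) := fun t ↦ by
    rw [← Complex.exp_add]
    push_cast
    ring_nf
  rw [fourierCoef_indicator measurableSet_Icc, Icc_inter_Icc]
  simp_rw [hphase]
  set J := Icc (a ⊔ 0) (b ⊓ (2 * Real.pi))
  have hJ : J ⊆ Icc a b := Icc_subset_Icc le_sup_left inf_le_left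
  have hderiv_phase : ∀ t ∈ J,
      HasDerivWithinAt (fun t ↦ lam * f t - k * t) (lam * f' t - k) J t := fun t ht ↦
    ((((hderiv t (hJ ht)).mono hJ).const_mul lam).sub
      ((hasDerivWithinAt_id t J).const_mul (k : ℝ))).congr_deriv (by rw [mul_one])
  have hlin : QuasilinearOn ℝ J f' := hmono.elim
    (fun h ↦ (h.mono hJ).quasilinearOn (convex_Icc _ _))
    fun h ↦ (h.mono hJ).quasilinearOn (convex_Icc _ _)
  have hlower : ∀ t ∈ J, |(k : ℝ)| - |lam| ≤ |lam * f' t - k| := fun t ht ↦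
    calc |(k : ℝ)| - |lam| ≤ |(k : ℝ)| - |lam * f' t| := by
          rw [abs_mul]
          exact sub_le_sub_left (mul_le_of_le_one_right (abs_nonneg _) (hbound t (hJ ht))) _
      _ ≤ |lam * f' t - k| := abs_sub_comm (lam * f' t) k ▸ abs_sub_abs_le_abs_sub _ _
  have hvdC := norm_setIntegral_cexp_le_of_le_abs_deriv (sub_pos.2 hk) hderiv_phase
    (quasilinearOn_const_mul_sub hlin lam k) hlower
  have hnorm : ‖1 / (2 * (Real.pi : ℂ))‖ = 1 / (2 * Real.pi) := by
    simp [abs_of_pos Real.pi_pos]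
  rw [norm_mul, hnorm]
  calc _ ≤ 1 / (2 * Real.pi) * (2 / (|(k : ℝ)| - |lam|)) := by gcongr
    _ = 1 / (Real.pi * (|(k : ℝ)| - |lam|)) := by
      have := (sub_pos.2 hk).ne'
      field_simp

/-- Lemma 4, van der Corput consequence: if f is C¹ on an interval
I = [a,b] ⊆ [0,2π] with f′ monotone and |f′| ≤ 1 on I, then for λ > 0 and |k| ≥ 2λ,
|(1_I e^{iλf})^∧(k)| ≤ 2/|k|. -/
theorem statement9
    (f f' : ℝ → ℝ) (a b : ℝ) (hab : a ≤ b)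
    (hI : Icc a b ⊆ Icc 0 (2 * Real.pi))
    (hderiv : ∀ t ∈ Icc a b, HasDerivWithinAt f (f' t) (Icc a b) t)
    (hcont : ContinuousOn f' (Icc a b))
    (hmono : MonotoneOn f' (Icc a b) ∨ AntitoneOn f' (Icc a b))
    (hbound : ∀ t ∈ Icc a b, |f' t| ≤ 1)
    (lam : ℝ) (hlam : 0 < lam) :
    ∀ k : ℤ, 2 * lam ≤ |(k : ℝ)| →
      ‖fourierCoef
        (Set.indicator (Icc a b)
          (fun t => Complex.exp (Complex.I * (lam : ℂ) * (f t : ℂ)))) k‖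
        ≤ 2 / |(k : ℝ)| := by
  intro k hk
  have hk' : 2 * |lam| ≤ |(k : ℝ)| := by rwa [abs_of_pos hlam]
  have hk0 : |lam| < |(k : ℝ)| := by linarith [abs_pos_of_pos hlam]
  exact (statement9_general f f' a b hderiv hmono hbound lam k hk0).trans
    (one_div_pi_mul_sub_le ((abs_nonneg lam).trans_lt hk0) hk')
end
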